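/- arXiv:1909.00220 — 4 statements merged into one kernel-verified Lean document; each statement's English description precedes it below -/
import Mathlib

section
/- Fix z ∈ ℂ with Re z ≥ 0. For every integer k ≥ 0 there exists a constant c_k = c(k,z) > 0 such that for all r > 0 and all integers j ≥ 0, the function h^z_{j,r} is C^∞ on ℝ and sup_{ξ∈ℝ} |(h^z_{j,r})^{(k)}(ξ)| ≤ c_k r^{−k} 2^{−(Re z − k)j}. -/
open Real MeasureTheory

/-- ψ(ξ) = e^{−1/ξ²} for ξ > 0 and 0 for ξ ≤ 0. -/
noncomputable def psi (x : ℝ) : ℝ := if 0 < x then Real.exp (-1 / x ^ 2) else 0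

/-- ψ₁(ξ) = ψ(ξ)ψ(1−ξ). -/
noncomputable def psi1 (x : ℝ) : ℝ := psi x * psi (1 - x)

/-- φ(ξ) = ψ₁(ξ + 5/4). -/
noncomputable def phiFn (x : ℝ) : ℝ := psi1 (x + 5 / 4)

/-- φ_j(ξ) = φ(2^j(ξ − 1)). -/
noncomputable def phiJ (j : ℕ) (x : ℝ) : ℝ := phiFn (2 ^ j * (x - 1))

/-- χ_j(ξ) = φ_j(ξ)/Σ_{i≥0} φ_i(ξ) where the denominator is positive, and 0 otherwise. -/
noncomputable def chiJ (j : ℕ) (x : ℝ) : ℝ :=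
  if 0 < ∑' i : ℕ, phiJ i x then phiJ j x / ∑' i : ℕ, phiJ i x else 0

/-- h^z_{j,r}(ξ) = (1 − ξ²/r²)_+^z e^{ξ²/r²} χ_j((ξ/r)²). -/
noncomputable def hzjr (z : ℂ) (j : ℕ) (r : ℝ) (x : ℝ) : ℂ :=
  (if 0 < 1 - x ^ 2 / r ^ 2 then ((1 - x ^ 2 / r ^ 2 : ℝ) : ℂ) ^ z else 0) *
    Complex.exp ((x ^ 2 / r ^ 2 : ℝ) : ℂ) * ((chiJ j ((x / r) ^ 2) : ℝ) : ℂ)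

/-!
Everything is expressed in the variable `t = 1 - ξ²/r²`: with `profile z j t = t₊ᶻ χ_j(1 - t)` one
has `h^z_{j,r}(ξ) = e^{ξ²/r²} profile z j (1 - ξ²/r²)`. The cutoffs are dyadically self-similar,
`χ_{j+a}(1 - t) = χ_j(1 - 2ᵃ t)`, but only for `j ≥ 2`, because the sum over `i ≥ 0` in the
denominator breaks the dilation symmetry at `j = 0, 1`. Hence
`profile z (2 + a) t = 2^{-az} profile z 2 (2ᵃ t)` with `profile z 2` a fixed test function, and
each derivative costs a factor `2ᵃ` by the chain rule, uniformly on the support `|ξ| ≤ r`. The cases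
`j = 0, 1` are two single test functions.
-/

open Set Filter Topology Function
open scoped ContDiff

section UniformDerivativeBounds

variable {𝕜 E F A : Type*} [NontriviallyNormedField 𝕜] [NormedAddCommGroup E] [NormedSpace 𝕜 E]
  [NormedAddCommGroup F] [NormedSpace 𝕜 F] [NormedRing A] [NormedAlgebra 𝕜 A] {n : ℕ} {K : Set E}

theorem exists_one_le_forall_norm_iteratedFDeriv_le_of_isCompact {f : E → F} (hf : ContDiff 𝕜 n f)
    (hK : IsCompact K) : ∃ C : ℝ, 1 ≤ C ∧ ∀ i ≤ n, ∀ x ∈ K, ‖iteratedFDeriv 𝕜 i f x‖ ≤ C := by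
  have bound_one_order (i : ℕ) :
      ∃ C : ℝ, i ≤ n → ∀ x ∈ K, ‖iteratedFDeriv 𝕜 i f x‖ ≤ C := by
    by_cases hi : i ≤ n
    · obtain ⟨C, hC⟩ := hK.exists_bound_of_continuousOn
        (hf.continuous_iteratedFDeriv (by exact_mod_cast hi)).continuousOn
      exact ⟨C, fun _ => hC⟩
    · exact ⟨0, fun h => absurd h hi⟩
  choose C hC using bound_one_order
  obtain ⟨M, hM⟩ := ((Finset.range (n + 1)).image C).bddAbove
  refine ⟨max 1 M, le_max_left _ _, fun i hi x hx => (hC i hi x hx).trans (le_max_of_le_right ?_)⟩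
  exact hM (Finset.mem_coe.2 (Finset.mem_image_of_mem C (Finset.mem_range_succ_iff.2 hi)))

theorem exists_one_le_forall_norm_iteratedFDeriv_le_of_hasCompactSupport {f : E → F}
    (hf : ContDiff 𝕜 n f) (hfc : HasCompactSupport f) :
    ∃ C : ℝ, 1 ≤ C ∧ ∀ i ≤ n, ∀ x, ‖iteratedFDeriv 𝕜 i f x‖ ≤ C := by
  obtain ⟨C, hC, hfC⟩ := exists_one_le_forall_norm_iteratedFDeriv_le_of_isCompact hf hfc
  refine ⟨C, hC, fun i hi x => ?_⟩
  by_cases hx : x ∈ tsupport f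
  · exact hfC i hi x hx
  · rw [notMem_support.1 (notMem_subset (support_iteratedFDeriv_subset i) hx), norm_zero]
    positivity

theorem iteratedFDeriv_comp_eq_zero {G : Type*} [NormedAddCommGroup G] [NormedSpace 𝕜 G]
    {g : F → G} {f : E → F} {x : E} (hg : ContDiff 𝕜 n g) (hf : ContDiff 𝕜 n f)
    (hgx : ∀ i ≤ n, iteratedFDeriv 𝕜 i g (f x) = 0) : iteratedFDeriv 𝕜 n (g ∘ f) x = 0 := by
  obtain ⟨D, hD, hfD⟩ :=
    exists_one_le_forall_norm_iteratedFDeriv_le_of_isCompact hf (isCompact_singleton (x := x))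
  have := norm_iteratedFDeriv_comp_le (C := 0) hg hf le_rfl x (fun i hi => by simp [hgx i hi])
    (fun i hi hin => (hfD i hin x rfl).trans (le_self_pow₀ hD (by omega)))
  simpa using this

theorem exists_forall_norm_iteratedFDeriv_comp_smul_le {G : Type*} [NormedAddCommGroup G]
    [NormedSpace 𝕜 G] {g : F → G} {q : E → F} (hg : ContDiff 𝕜 n g) (hgc : HasCompactSupport g)
    (hq : ContDiff 𝕜 n q) (hK : IsCompact K) :
    ∃ C : ℝ, 0 < C ∧ ∀ c : 𝕜, 1 ≤ ‖c‖ → ∀ i ≤ n, ∀ x ∈ K,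
      ‖iteratedFDeriv 𝕜 i (fun y => g (c • q y)) x‖ ≤ C * ‖c‖ ^ n := by
  obtain ⟨B, hB, hgB⟩ := exists_one_le_forall_norm_iteratedFDeriv_le_of_hasCompactSupport hg hgc
  obtain ⟨D, hD, hqD⟩ := exists_one_le_forall_norm_iteratedFDeriv_le_of_isCompact hq hK
  refine ⟨n.factorial * B * D ^ n, by positivity, fun c hc i hi x hx => ?_⟩
  have hcD : 1 ≤ ‖c‖ * D := one_le_mul_of_one_le_of_one_le hc hD
  have smul_bound (m : ℕ) (hm : 1 ≤ m) (hmi : m ≤ i) :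
      ‖iteratedFDeriv 𝕜 m (c • q) x‖ ≤ (‖c‖ * D) ^ m := by
    have hmn : m ≤ n := hmi.trans hi
    rw [iteratedFDeriv_const_smul_apply (hq.of_le (by exact_mod_cast hmn)).contDiffAt, norm_smul]
    calc ‖c‖ * ‖iteratedFDeriv 𝕜 m q x‖ ≤ ‖c‖ * D := by gcongr; exact hqD m hmn x hx
      _ ≤ (‖c‖ * D) ^ m := le_self_pow₀ hcD (by omega)
  calc ‖iteratedFDeriv 𝕜 i (g ∘ (c • q)) x‖
      ≤ i.factorial * B * (‖c‖ * D) ^ i :=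
        norm_iteratedFDeriv_comp_le hg (contDiff_const.smul hq) (by exact_mod_cast hi) x
          (fun m hm => hgB m (hm.trans hi) _) smul_bound
    _ ≤ n.factorial * B * (‖c‖ * D) ^ n := by gcongr
    _ = n.factorial * B * D ^ n * ‖c‖ ^ n := by ring

theorem exists_forall_norm_iteratedFDeriv_mul_comp_smul_le {a : E → A} {g : F → A} {q : E → F}
    (ha : ContDiff 𝕜 n a) (hg : ContDiff 𝕜 n g) (hgc : HasCompactSupport g) (hq : ContDiff 𝕜 n q)
    (hK : IsCompact K) :
    ∃ C : ℝ, 0 < C ∧ ∀ c : 𝕜, 1 ≤ ‖c‖ → ∀ x ∈ K,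
      ‖iteratedFDeriv 𝕜 n (fun y => a y * g (c • q y)) x‖ ≤ C * ‖c‖ ^ n := by
  obtain ⟨M, hM, haM⟩ := exists_one_le_forall_norm_iteratedFDeriv_le_of_isCompact ha hK
  obtain ⟨B, hB, hgB⟩ := exists_forall_norm_iteratedFDeriv_comp_smul_le hg hgc hq hK
  refine ⟨2 ^ n * M * B, by positivity, fun c hc x hx => ?_⟩
  calc ‖iteratedFDeriv 𝕜 n (fun y => a y * g (c • q y)) x‖
      ≤ ∑ i ∈ Finset.range (n + 1), (n.choose i : ℝ) * ‖iteratedFDeriv 𝕜 i a x‖ *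
          ‖iteratedFDeriv 𝕜 (n - i) (fun y => g (c • q y)) x‖ :=
        norm_iteratedFDeriv_mul_le ha (hg.comp (contDiff_const.smul hq)) x le_rfl
    _ ≤ ∑ i ∈ Finset.range (n + 1), (n.choose i : ℝ) * M * (B * ‖c‖ ^ n) := by
        gcongr with i hi
        · exact haM i (Finset.mem_range_succ_iff.1 hi) x hx
        · exact hgB c hc (n - i) (Nat.sub_le n i) x hx
    _ = 2 ^ n * M * B * ‖c‖ ^ n := by
        rw [← Finset.sum_mul, ← Finset.sum_mul, ← Nat.cast_sum, Nat.sum_range_choose]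
        push_cast
        ring

end UniformDerivativeBounds

section FlatGluing

variable {F : Type*} [NormedAddCommGroup F] [NormedSpace ℝ F] {f : ℝ → F} {a : ℝ}

theorem hasDerivAt_indicator_Ioi (hf : Differentiable ℝ f) (hfa : f a = 0) (hfa' : deriv f a = 0)
    (x : ℝ) : HasDerivAt ((Ioi a).indicator f) ((Ioi a).indicator (deriv f) x) x := by
  rcases lt_trichotomy x a with hx | rfl | hx
  · rw [indicator_of_notMem (notMem_Ioi.2 hx.le)]
    refine (hasDerivAt_const x 0).congr_of_eventuallyEq ?_
    filter_upwards [Iio_mem_nhds hx] with y hy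
    exact indicator_of_notMem (notMem_Ioi.2 (le_of_lt hy)) f
  · have hflat : HasDerivAt f 0 x := hfa' ▸ (hf x).hasDerivAt
    rw [hasDerivAt_iff_isLittleO] at hflat
    rw [indicator_of_notMem self_notMem_Ioi, hasDerivAt_iff_isLittleO]
    refine (Asymptotics.IsBigO.of_bound 1 (Eventually.of_forall fun y => ?_)).trans_isLittleO hflat
    simpa [hfa] using norm_indicator_le_norm_self f y
  · rw [indicator_of_mem (mem_Ioi.2 hx)]
    refine (hf x).hasDerivAt.congr_of_eventuallyEq ?_
    filter_upwards [Ioi_mem_nhds hx] with y hy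
    exact indicator_of_mem hy f

theorem contDiff_indicator_Ioi {n : ℕ} (hf : ContDiff ℝ n f)
    (hfa : ∀ i ≤ n, iteratedDeriv i f a = 0) : ContDiff ℝ n ((Ioi a).indicator f) := by
  induction n generalizing f with
  | zero =>
    refine contDiff_zero.2 (continuous_indicator ?_ hf.continuous.continuousOn)
    simpa [frontier_Ioi] using hfa 0 le_rfl
  | succ n ih =>
    rw [Nat.cast_succ] at hf ⊢
    obtain ⟨hdiff, -, hderiv⟩ := contDiff_succ_iff_deriv.1 hf
    have hasDeriv := hasDerivAt_indicator_Ioi hdiff (by simpa using hfa 0 (by omega))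
      (by simpa using hfa 1 (by omega))
    refine contDiff_succ_iff_deriv.2 ⟨fun x => (hasDeriv x).differentiableAt, by simp, ?_⟩
    rw [funext fun x => (hasDeriv x).deriv]
    refine ih hderiv fun i hi => ?_
    rw [← iteratedDeriv_succ']
    exact hfa (i + 1) (by omega)

theorem iteratedDeriv_eq_zero_of_eqOn_Iio {n : ℕ} (hf : ContDiff ℝ n f) (h : EqOn f 0 (Iio a)) :
    iteratedDeriv n f a = 0 := by
  have hzero : EqOn (iteratedDeriv n f) 0 (Iio a) := fun x hx => by
    rw [(h.eventuallyEq_of_mem (Iio_mem_nhds hx)).iteratedDeriv_eq n]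
    simp
  have := hzero.closure (hf.continuous_iteratedDeriv n le_rfl) continuous_const
  exact this (closure_Iio a ▸ self_mem_Iic)

end FlatGluing

section Cutoffs

theorem psi_eq_indicator : psi = (Ioi 0).indicator (expNegInvGlue ∘ fun x : ℝ => x ^ 2) := by
  ext x
  by_cases hx : 0 < x
  · simp [psi, expNegInvGlue, hx, (pow_pos hx 2).not_ge, neg_div]
  · simp [psi, hx]

theorem contDiff_psi : ContDiff ℝ ∞ psi := by
  refine contDiff_infty.2 fun n => ?_
  rw [psi_eq_indicator]
  refine contDiff_indicator_Ioi (expNegInvGlue.contDiff.comp (by fun_prop)) fun i _ => ?_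
  have flat (m : ℕ) : iteratedFDeriv ℝ m expNegInvGlue 0 = 0 := by
    rw [← norm_eq_zero, norm_iteratedFDeriv_eq_norm_iteratedDeriv,
      iteratedDeriv_eq_zero_of_eqOn_Iio expNegInvGlue.contDiff
        fun x hx => expNegInvGlue.zero_of_nonpos (le_of_lt hx), norm_zero]
  rw [← norm_eq_zero, ← norm_iteratedFDeriv_eq_norm_iteratedDeriv,
    iteratedFDeriv_comp_eq_zero (expNegInvGlue.contDiff (n := i)) (by fun_prop)
      fun m _ => by simpa using flat m, norm_zero]

theorem psi_pos {x : ℝ} (hx : 0 < x) : 0 < psi x := by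
  rw [psi, if_pos hx]
  exact Real.exp_pos _

theorem psi_of_nonpos {x : ℝ} (hx : x ≤ 0) : psi x = 0 := if_neg hx.not_gt

theorem contDiff_phiFn : ContDiff ℝ ∞ phiFn :=
  (contDiff_psi.comp (by fun_prop)).mul (contDiff_psi.comp (by fun_prop))

theorem phiFn_pos {x : ℝ} (hx : x ∈ Ioo (-(5 / 4)) (-(1 / 4))) : 0 < phiFn x :=
  mul_pos (psi_pos (by linarith [hx.1])) (psi_pos (by linarith [hx.2]))

theorem phiFn_of_notMem {x : ℝ} (hx : x ∉ Ioo (-(5 / 4)) (-(1 / 4))) : phiFn x = 0 := by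
  rw [phiFn, psi1]
  rcases le_or_gt x (-(5 / 4)) with hlow | hlow
  · rw [psi_of_nonpos (by linarith), zero_mul]
  · have hhigh : -(1 / 4) ≤ x := not_lt.1 fun h => hx ⟨hlow, h⟩
    rw [psi_of_nonpos (x := 1 - _) (by linarith), mul_zero]

theorem contDiff_phiJ (j : ℕ) : ContDiff ℝ ∞ (phiJ j) :=
  contDiff_phiFn.comp (by fun_prop)

theorem phiJ_add_one_sub (j a : ℕ) (t : ℝ) : phiJ (j + a) (1 - t) = phiJ j (1 - 2 ^ a * t) := by
  unfold phiJ
  congr 1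
  ring

theorem phiJ_pos {j : ℕ} {x : ℝ} (hx : 2 ^ j * (1 - x) ∈ Ioo (1 / 4 : ℝ) (5 / 4)) :
    0 < phiJ j x :=
  phiFn_pos ⟨by linarith [hx.2], by linarith [hx.1]⟩

theorem phiJ_of_notMem {j : ℕ} {x : ℝ} (hx : 2 ^ j * (1 - x) ∉ Ioo (1 / 4 : ℝ) (5 / 4)) :
    phiJ j x = 0 :=
  phiFn_of_notMem fun h => hx ⟨by linarith [h.2], by linarith [h.1]⟩

theorem phiJ_nonneg (j : ℕ) (x : ℝ) : 0 ≤ phiJ j x := by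
  by_cases hx : 2 ^ j * (1 - x) ∈ Ioo (1 / 4 : ℝ) (5 / 4)
  · exact (phiJ_pos hx).le
  · exact (phiJ_of_notMem hx).ge

theorem phiJ_eq_zero_of_five_fourths_le {N i : ℕ} {x : ℝ} (hN : 5 / 4 ≤ 2 ^ N * (1 - x))
    (hi : N ≤ i) : phiJ i x = 0 := by
  have hx : 0 < 1 - x :=
    (mul_pos_iff_of_pos_left (by positivity : (0 : ℝ) < 2 ^ N)).1 (by linarith)
  have : (2 : ℝ) ^ N * (1 - x) ≤ 2 ^ i * (1 - x) := by gcongr; norm_num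
  exact phiJ_of_notMem fun h => by linarith [h.2]

theorem exists_mem_Ioo_two_pow_mul {t : ℝ} (ht : t ∈ Ioo (0 : ℝ) (5 / 4)) :
    ∃ i : ℕ, 2 ^ i * t ∈ Ioo (1 / 4 : ℝ) (5 / 4) := by
  rcases le_or_gt t 1 with h | h
  · obtain ⟨i, hi, hi'⟩ := exists_nat_pow_near ((one_le_inv₀ ht.1).2 h) one_lt_two
    rw [le_inv_comm₀ (by positivity) ht.1, ← one_div, le_div_iff₀' (by positivity)] at hi
    rw [inv_lt_iff_one_lt_mul₀ ht.1, pow_succ] at hi'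
    exact ⟨i, by linarith, by linarith⟩
  · exact ⟨0, by linarith, by linarith [ht.2]⟩

theorem exists_five_fourths_lt_two_pow_mul {t : ℝ} (ht : 0 < t) : ∃ N : ℕ, 5 / 4 < 2 ^ N * t := by
  obtain ⟨N, hN⟩ := pow_unbounded_of_one_lt (5 / 4 / t) one_lt_two
  exact ⟨N, (div_lt_iff₀ ht).1 hN⟩

theorem tsum_phiJ_pos {x : ℝ} (hx : x ∈ Ioo (-(1 / 4)) 1) : 0 < ∑' i, phiJ i x := by
  obtain ⟨i, hi⟩ := exists_mem_Ioo_two_pow_mul (t := 1 - x) ⟨by linarith [hx.2], by linarith [hx.1]⟩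
  have summable : Summable fun i => phiJ i x := by
    obtain ⟨N, hN⟩ := exists_five_fourths_lt_two_pow_mul (sub_pos.2 hx.2)
    exact summable_of_ne_finset_zero (s := Finset.range N) fun i hi =>
      phiJ_eq_zero_of_five_fourths_le hN.le (by simpa using hi)
  exact summable.tsum_pos (fun i => phiJ_nonneg i x) i (phiJ_pos hi)

theorem contDiffAt_tsum_phiJ {x : ℝ} (hx : x < 1) : ContDiffAt ℝ ∞ (fun y => ∑' i, phiJ i y) x := by
  obtain ⟨N, hN⟩ := exists_five_fourths_lt_two_pow_mul (sub_pos.2 hx)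
  have finite_sum : (fun y => ∑' i, phiJ i y) =ᶠ[𝓝 x] fun y => ∑ i ∈ Finset.range N, phiJ i y := by
    have hcont : ContinuousAt (fun y : ℝ => 2 ^ N * (1 - y)) x := by fun_prop
    filter_upwards [hcont.eventually (lt_mem_nhds hN)] with y hy
    exact tsum_eq_sum fun i hi => phiJ_eq_zero_of_five_fourths_le hy.le (by simpa using hi)
  exact (ContDiff.sum fun i _ => contDiff_phiJ i).contDiffAt.congr_of_eventuallyEq finite_sum

theorem chiJ_eq_zero_of_phiJ_eq_zero {j : ℕ} {x : ℝ} (h : phiJ j x = 0) : chiJ j x = 0 := by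
  simp [chiJ, h]

theorem contDiffAt_chiJ (j : ℕ) {x : ℝ} (hx : x ∈ Ioo (-(1 / 4)) 1) :
    ContDiffAt ℝ ∞ (chiJ j) x := by
  refine ((contDiff_phiJ j).contDiffAt.div (contDiffAt_tsum_phiJ hx.2)
    (tsum_phiJ_pos hx).ne').congr_of_eventuallyEq ?_
  filter_upwards [isOpen_Ioo.mem_nhds hx] with y hy
  exact if_pos (tsum_phiJ_pos hy)

-- Where `φ_{j+a}` is nonzero, `φ_i` vanishes for `i < j + a - 2`, so for `2 ≤ j` the `a` terms lost
-- by the index shift in the denominator are all zero.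
theorem chiJ_add_one_sub {j : ℕ} (hj : 2 ≤ j) (a : ℕ) (t : ℝ) :
    chiJ (j + a) (1 - t) = chiJ j (1 - 2 ^ a * t) := by
  by_cases ht : 2 ^ (j + a) * (1 - (1 - t)) ∈ Ioo (1 / 4 : ℝ) (5 / 4)
  · rw [sub_sub_cancel] at ht
    have ht0 : 0 < t :=
      (mul_pos_iff_of_pos_left (by positivity : (0 : ℝ) < 2 ^ (j + a))).1 (by linarith [ht.1])
    have low_terms_vanish (i : ℕ) (hi : i < a) : phiJ i (1 - t) = 0 := by
      have : (2 : ℝ) ^ (i + 3) * t ≤ 2 ^ (j + a) * t :=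
        mul_le_mul_of_nonneg_right (pow_le_pow_right₀ one_le_two (by omega)) ht0.le
      refine phiJ_of_notMem fun h => ?_
      rw [sub_sub_cancel] at h
      rw [pow_add] at this
      linarith [h.1, ht.2]
    have hsum : ∑' i, phiJ i (1 - t) = ∑' i, phiJ i (1 - 2 ^ a * t) := by
      simp_rw [← phiJ_add_one_sub]
      refine ((add_left_injective a).tsum_eq fun i hi => ?_).symm
      exact ⟨i - a, Nat.sub_add_cancel (not_lt.1 fun h => hi (low_terms_vanish i h))⟩
    simp only [chiJ, hsum, phiJ_add_one_sub]
  · have hzero := phiJ_of_notMem ht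
    rw [chiJ_eq_zero_of_phiJ_eq_zero hzero,
      chiJ_eq_zero_of_phiJ_eq_zero (phiJ_add_one_sub j a t ▸ hzero)]

end Cutoffs

section Profile

theorem contDiffAt_ofReal_posPart_cpow (z : ℂ) {t : ℝ} (ht : 0 < t) :
    ContDiffAt ℝ ∞ (fun s : ℝ => if 0 < s then (s : ℂ) ^ z else 0) t := by
  have hlog : ContDiffAt ℝ ∞ (fun s : ℝ => (Real.log s : ℂ)) t :=
    Complex.ofRealCLM.contDiff.contDiffAt.comp t (Real.contDiffAt_log.2 ht.ne')
  refine (hlog.mul (contDiffAt_const (c := z))).cexp.congr_of_eventuallyEq ?_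
  filter_upwards [lt_mem_nhds ht] with s hs
  rw [if_pos hs, Complex.cpow_def_of_ne_zero (Complex.ofReal_ne_zero.2 hs.ne'),
    ← Complex.ofReal_log hs.le]

/-- The function `t ↦ t₊ᶻ χ_j(1 - t)` through which `h^z_{j,r}` factors, with `t = 1 - ξ²/r²`. -/
noncomputable def profile (z : ℂ) (j : ℕ) (t : ℝ) : ℂ :=
  (if 0 < t then (t : ℂ) ^ z else 0) * (chiJ j (1 - t) : ℂ)

variable (z : ℂ) (j : ℕ)

theorem hzjr_eq_exp_mul_profile (r x : ℝ) :
    hzjr z j r x = Complex.exp (((x / r) ^ 2 : ℝ) : ℂ) * profile z j (1 - (x / r) ^ 2) := by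
  rw [hzjr, profile, ← div_pow, sub_sub_cancel]
  ring

variable {z j} in
theorem profile_of_notMem {t : ℝ} (ht : 2 ^ j * t ∉ Ioo (1 / 4 : ℝ) (5 / 4)) :
    profile z j t = 0 := by
  rw [profile, chiJ_eq_zero_of_phiJ_eq_zero (phiJ_of_notMem (by rwa [sub_sub_cancel])),
    Complex.ofReal_zero, mul_zero]

theorem contDiffAt_profile {t : ℝ} (ht : t < 5 / 4) : ContDiffAt ℝ ∞ (profile z j) t := by
  rcases le_or_gt t 0 with h | h
  · have hcont : ContinuousAt (fun s : ℝ => 2 ^ j * s) t := by fun_prop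
    have hlt : 2 ^ j * t < 1 / 4 :=
      (mul_nonpos_of_nonneg_of_nonpos (by positivity) h).trans_lt (by norm_num)
    refine (contDiffAt_const (c := 0)).congr_of_eventuallyEq ?_
    filter_upwards [hcont.eventually (gt_mem_nhds hlt)] with s hs
    exact profile_of_notMem fun hmem => hs.not_gt hmem.1
  · have hchi : ContDiffAt ℝ ∞ (fun s : ℝ => (chiJ j (1 - s) : ℂ)) t :=
      Complex.ofRealCLM.contDiff.contDiffAt.comp t
        ((contDiffAt_chiJ j ⟨by linarith, by linarith⟩).comp t (by fun_prop))
    exact (contDiffAt_ofReal_posPart_cpow z h).mul hchi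

variable {j} in
theorem contDiff_profile (hj : 1 ≤ j) : ContDiff ℝ ∞ (profile z j) := by
  refine contDiff_iff_contDiffAt.2 fun t => ?_
  rcases lt_or_ge t (5 / 4) with ht | ht
  · exact contDiffAt_profile z j ht
  · refine (contDiffAt_const (c := 0)).congr_of_eventuallyEq ?_
    filter_upwards [lt_mem_nhds (show 1 < t by linarith)] with s hs
    refine profile_of_notMem fun hmem => ?_
    have : (2 : ℝ) ^ 1 * s ≤ 2 ^ j * s := by gcongr; norm_num
    linarith [hmem.2]

theorem hasCompactSupport_profile : HasCompactSupport (profile z j) := by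
  refine HasCompactSupport.intro (isCompact_Icc (a := 0) (b := 5 / 4)) fun t ht => ?_
  refine profile_of_notMem fun hmem => ht ?_
  have ht0 : 0 < t :=
    (mul_pos_iff_of_pos_left (by positivity : (0 : ℝ) < 2 ^ j)).1 (by linarith [hmem.1])
  have : t ≤ 2 ^ j * t := le_mul_of_one_le_left ht0.le (one_le_pow₀ one_le_two)
  exact ⟨ht0.le, by linarith [hmem.2]⟩

variable {j} in
theorem profile_add (hj : 2 ≤ j) (a : ℕ) (t : ℝ) :
    profile z (j + a) t = 2 ^ (-(a * z)) * profile z j (2 ^ a * t) := by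
  rw [profile, profile, chiJ_add_one_sub hj, ← mul_assoc]
  congr 1
  by_cases ht : 0 < t
  · have hpow : (((2 ^ a * t : ℝ) : ℂ)) ^ z = 2 ^ (a * z) * (t : ℂ) ^ z := by
      have hpow_two : ((2 : ℂ) ^ a) ^ z = 2 ^ (a * z) :=
        (Complex.natCast_cpow_natCast_mul 2 a z).symm
      rw [Complex.ofReal_mul, Complex.mul_cpow_ofReal_nonneg (by positivity) ht.le,
        Complex.ofReal_pow, Complex.ofReal_ofNat, hpow_two]
    rw [if_pos ht, if_pos (by positivity), hpow, ← mul_assoc, ← Complex.cpow_add _ _ two_ne_zero,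
      neg_add_cancel, Complex.cpow_zero, one_mul]
  · simp [ht]

end Profile

section UnitScale

theorem contDiff_cexp_ofReal_sq : ContDiff ℝ ∞ fun s : ℝ => Complex.exp ((s ^ 2 : ℝ) : ℂ) :=
  (Complex.ofRealCLM.contDiff.comp (contDiff_id.pow 2)).cexp

variable (z : ℂ) (j : ℕ)

theorem contDiff_hzjr (r : ℝ) : ContDiff ℝ ∞ (hzjr z j r) := by
  rw [funext (hzjr_eq_exp_mul_profile z j r)]
  refine (contDiff_cexp_ofReal_sq.comp (contDiff_id.div_const r)).mul
    (contDiff_iff_contDiffAt.2 fun x => ?_)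
  exact (contDiffAt_profile z j (by linarith [sq_nonneg (x / r)])).comp x (by fun_prop)

theorem tsupport_hzjr_one_subset : tsupport (hzjr z j 1) ⊆ Icc (-1) 1 := by
  refine closure_minimal (fun s hs => ?_) isClosed_Icc
  by_contra hmem
  refine hs ?_
  have : 1 < s ^ 2 := by
    rwa [one_lt_sq_iff_one_lt_abs, ← not_le, abs_le]
  rw [hzjr_eq_exp_mul_profile, div_one, profile_of_notMem, mul_zero]
  intro h
  have := mul_nonpos_of_nonneg_of_nonpos (pow_nonneg zero_le_two j : (0 : ℝ) ≤ 2 ^ j)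
    (show 1 - s ^ 2 ≤ 0 by linarith)
  linarith [h.1]

theorem iteratedDeriv_hzjr (r : ℝ) (k : ℕ) (x : ℝ) :
    iteratedDeriv k (hzjr z j r) x = r⁻¹ ^ k • iteratedDeriv k (hzjr z j 1) (r⁻¹ * x) := by
  have hscale : hzjr z j r = fun x => hzjr z j 1 (r⁻¹ * x) := by
    ext x
    rw [hzjr_eq_exp_mul_profile, hzjr_eq_exp_mul_profile, div_one, div_eq_inv_mul]
  rw [hscale, iteratedDeriv_comp_const_smul (contDiff_infty.1 (contDiff_hzjr z j 1) k)]

theorem exists_forall_norm_iteratedDeriv_hzjr_one_le (k : ℕ) :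
    ∃ C : ℝ, 0 < C ∧ ∀ s, ‖iteratedDeriv k (hzjr z j 1) s‖ ≤ C := by
  have hcompact : HasCompactSupport (hzjr z j 1) :=
    isCompact_Icc.of_isClosed_subset (isClosed_tsupport _) (tsupport_hzjr_one_subset z j)
  obtain ⟨C, hC, hbound⟩ := exists_one_le_forall_norm_iteratedFDeriv_le_of_hasCompactSupport
    (contDiff_infty.1 (contDiff_hzjr z j 1) k) hcompact
  refine ⟨C, by positivity, fun s => ?_⟩
  rw [← norm_iteratedFDeriv_eq_norm_iteratedDeriv]
  exact hbound k le_rfl s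

variable {j} in
theorem hzjr_one_add (hj : 2 ≤ j) (a : ℕ) (s : ℝ) :
    hzjr z (j + a) 1 s = 2 ^ (-(a * z)) *
      (Complex.exp ((s ^ 2 : ℝ) : ℂ) * profile z j ((2 : ℝ) ^ a • (1 - s ^ 2))) := by
  rw [hzjr_eq_exp_mul_profile, div_one, profile_add z hj, smul_eq_mul]
  ring

variable {j} in
theorem exists_forall_norm_iteratedDeriv_hzjr_one_add_le (hj : 2 ≤ j) (k : ℕ) :
    ∃ C : ℝ, 0 < C ∧ ∀ (a : ℕ) (s : ℝ), ‖iteratedDeriv k (hzjr z (j + a) 1) s‖ ≤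
      C * (2 : ℝ) ^ (-((z.re - k) * a)) := by
  obtain ⟨C, hC, hbound⟩ := exists_forall_norm_iteratedFDeriv_mul_comp_smul_le
    (K := Icc (-1 : ℝ) 1) (q := fun s : ℝ => 1 - s ^ 2)
    (contDiff_infty.1 contDiff_cexp_ofReal_sq k)
    (contDiff_infty.1 (contDiff_profile z (one_le_two.trans hj)) k)
    (hasCompactSupport_profile z j) (by fun_prop) isCompact_Icc
  refine ⟨C, hC, fun a s => ?_⟩
  by_cases hs : s ∈ Icc (-1 : ℝ) 1
  · have norm_two_pow : ‖(2 : ℝ) ^ a‖ = 2 ^ a := by simp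
    have norm_cpow : ‖(2 : ℂ) ^ (-(a * z))‖ = (2 : ℝ) ^ (-(a * z.re)) := by
      simpa using Complex.norm_cpow_eq_rpow_re_of_pos two_pos (-(a * z))
    rw [funext (hzjr_one_add z hj a), iteratedDeriv_const_mul_field, norm_mul, norm_cpow,
      ← norm_iteratedFDeriv_eq_norm_iteratedDeriv]
    calc _ ≤ (2 : ℝ) ^ (-(a * z.re)) * (C * (2 ^ a) ^ k) := by
          gcongr
          simpa only [norm_two_pow] using
            hbound ((2 : ℝ) ^ a) (by rw [norm_two_pow]; exact one_le_pow₀ one_le_two) s hs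
      _ = C * (2 : ℝ) ^ (-((z.re - k) * a)) := by
          rw [← pow_mul, ← Real.rpow_natCast, mul_left_comm, ← Real.rpow_add two_pos]
          push_cast
          ring_nf
  · rw [← norm_iteratedFDeriv_eq_norm_iteratedDeriv,
      notMem_support.1 (notMem_subset ((support_iteratedFDeriv_subset k).trans
        (tsupport_hzjr_one_subset z _)) hs), norm_zero]
    positivity

theorem exists_forall_forall_norm_iteratedDeriv_hzjr_one_le (k : ℕ) :
    ∃ C : ℝ, 0 < C ∧ ∀ (j : ℕ) (s : ℝ), ‖iteratedDeriv k (hzjr z j 1) s‖ ≤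
      C * (2 : ℝ) ^ (-((z.re - k) * j)) := by
  obtain ⟨C₀, hC₀, h₀⟩ := exists_forall_norm_iteratedDeriv_hzjr_one_le z 0 k
  obtain ⟨C₁, hC₁, h₁⟩ := exists_forall_norm_iteratedDeriv_hzjr_one_le z 1 k
  obtain ⟨C₂, hC₂, h₂⟩ := exists_forall_norm_iteratedDeriv_hzjr_one_add_le z le_rfl k
  set w : ℕ → ℝ := fun j => (2 : ℝ) ^ (-((z.re - k) * j)) with hw
  have w_pos (j : ℕ) : 0 < w j := by positivity
  have w_add (i j : ℕ) : w (i + j) = w i * w j := by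
    simp only [hw, ← Real.rpow_add two_pos]
    push_cast
    ring_nf
  have pos₀ : 0 < C₀ / w 0 := div_pos hC₀ (w_pos 0)
  have pos₁ : 0 < C₁ / w 1 := div_pos hC₁ (w_pos 1)
  have pos₂ : 0 < C₂ / w 2 := div_pos hC₂ (w_pos 2)
  refine ⟨C₀ / w 0 + C₁ / w 1 + C₂ / w 2, by positivity, fun j s => ?_⟩
  match j with
  | 0 => exact (h₀ s).trans ((div_le_iff₀ (w_pos 0)).1 (by linarith))
  | 1 => exact (h₁ s).trans ((div_le_iff₀ (w_pos 1)).1 (by linarith))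
  | a + 2 =>
    rw [add_comm a 2]
    calc ‖iteratedDeriv k (hzjr z (2 + a) 1) s‖ ≤ C₂ * w a := h₂ a s
      _ = C₂ / w 2 * w (2 + a) := by rw [w_add, ← mul_assoc, div_mul_cancel₀ _ (w_pos 2).ne']
      _ ≤ _ := by gcongr; linarith

end UnitScale

theorem hzjr_iteratedDeriv_bound_general (z : ℂ) :
    ∀ k : ℕ, ∃ c : ℝ, 0 < c ∧ ∀ r : ℝ, 0 < r → ∀ j : ℕ,
      ContDiff ℝ (⊤ : ℕ∞) (hzjr z j r) ∧
      ∀ x : ℝ, ‖iteratedDeriv k (hzjr z j r) x‖ ≤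
        c * r ^ (-(k : ℤ)) * (2 : ℝ) ^ (-((z.re - k) * j)) := by
  intro k
  obtain ⟨C, hC, hbound⟩ := exists_forall_forall_norm_iteratedDeriv_hzjr_one_le z k
  refine ⟨C, hC, fun r hr j => ⟨contDiff_hzjr z j r, fun x => ?_⟩⟩
  have norm_scale : ‖r⁻¹ ^ k‖ = r ^ (-(k : ℤ)) := by
    rw [Real.norm_of_nonneg (by positivity), inv_pow, zpow_neg, zpow_natCast]
  calc ‖iteratedDeriv k (hzjr z j r) x‖
      = r ^ (-(k : ℤ)) * ‖iteratedDeriv k (hzjr z j 1) (r⁻¹ * x)‖ := by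
        rw [iteratedDeriv_hzjr, norm_smul, norm_scale]
    _ ≤ r ^ (-(k : ℤ)) * (C * (2 : ℝ) ^ (-((z.re - k) * j))) := by gcongr; exact hbound j _
    _ = C * r ^ (-(k : ℤ)) * (2 : ℝ) ^ (-((z.re - k) * j)) := by ring

/-- Fix z with Re z ≥ 0. For every k there is c_k > 0 such that for all r > 0 and j,
h^z_{j,r} is C^∞ and sup_ξ |(h^z_{j,r})^{(k)}(ξ)| ≤ c_k r^{−k} 2^{−(Re z − k)j}. -/
theorem hzjr_iteratedDeriv_bound (z : ℂ) (hz : 0 ≤ z.re) :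
    ∀ k : ℕ, ∃ c : ℝ, 0 < c ∧ ∀ r : ℝ, 0 < r → ∀ j : ℕ,
      ContDiff ℝ (⊤ : ℕ∞) (hzjr z j r) ∧
      ∀ x : ℝ, ‖iteratedDeriv k (hzjr z j r) x‖ ≤
        c * r ^ (-(k : ℤ)) * (2 : ℝ) ^ (-((z.re - k) * j)) :=
  hzjr_iteratedDeriv_bound_general z
end

section
/- Let z ∈ ℂ with Re z > 0. Then for every γ ∈ ℝ the integral ℳ(γ) := (2π)^{−1} ∫_0^∞ M(ξ) ξ^{−iγ−1} dξ converges absolutely, and there exists a constant c = c(z) > 0 such that |ℳ(γ)| ≤ c (1 + |γ|)^{−(Re z + 1)} for all γ ∈ ℝ. -/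
open Real MeasureTheory

/-- M(ξ) = (1−ξ)_+^z − e^{−ξ}, where (1−ξ)_+^z = (1−ξ)^z for ξ < 1 and 0 for ξ ≥ 1. -/
noncomputable def rieszM (z : ℂ) (x : ℝ) : ℂ :=
  (if x < 1 then ((1 - x : ℝ) : ℂ) ^ z else 0) - Complex.exp (-(x : ℂ))

/-!
For `0 < Re s` the Mellin transform of `M` is `B(s, z + 1) - Γ(s)`. Multiplied by `s`, both sides
are holomorphic on `-1 < Re s`, since `M` is smooth near `0` and vanishes there; so for `w = z + 1`
the transform equals `Γ(s) / Γ(s + w) * (Γ(w) - Γ(s + w))` on the punctured imaginary axis too.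
The bracket is bounded on vertical lines, and Euler's limit formula reduces the quotient of Gamma
functions to the products `∏ |1 + w / (s + j)|`, `j < n`. Up to bounded factors these are at most
`(|s + n| / |s|) ^ Re w`, because `∑ 1 / (s + j)` differs from `log (s + n) - log s` by a bounded
amount.
-/

open Asymptotics Filter Set Topology

lemma sq_norm_add_sq_le_sq_norm_add_ofReal {s : ℂ} (hs : 0 ≤ s.re) {t : ℝ} (ht : 0 ≤ t) :
    ‖s‖ ^ 2 + t ^ 2 ≤ ‖s + t‖ ^ 2 := by
  simp only [Complex.sq_norm, Complex.normSq_apply, Complex.add_re, Complex.add_im,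
    Complex.ofReal_re, Complex.ofReal_im, add_zero]
  linarith [mul_nonneg hs ht]

lemma mem_slitPlane_of_re_nonneg {s : ℂ} (hs : 0 ≤ s.re) (hs0 : s ≠ 0) :
    s ∈ Complex.slitPlane := by
  refine Complex.mem_slitPlane_iff.2 (hs.lt_or_eq.imp_right fun hre him => hs0 ?_)
  exact Complex.ext hre.symm him

lemma norm_one_add_le_exp (v : ℂ) : ‖1 + v‖ ≤ Real.exp (v.re + ‖v‖ ^ 2 / 2) := by
  refine (sq_le_sq₀ (norm_nonneg _) (Real.exp_pos _).le).1 ?_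
  calc ‖1 + v‖ ^ 2 = (2 * v.re + ‖v‖ ^ 2) + 1 := by
        simp only [Complex.sq_norm, Complex.normSq_apply, Complex.add_re, Complex.add_im,
          Complex.one_re, Complex.one_im]
        ring
    _ ≤ Real.exp (2 * v.re + ‖v‖ ^ 2) := Real.add_one_le_exp _
    _ = Real.exp (v.re + ‖v‖ ^ 2 / 2) ^ 2 := by
        rw [← Real.exp_nat_mul]
        congr 1
        push_cast
        ring

lemma norm_log_add_one_sub_log_sub_inv_le {s : ℂ} (hs : 0 ≤ s.re) (hs0 : s ≠ 0) :
    ‖Complex.log (s + 1) - Complex.log s - s⁻¹‖ ≤ (‖s‖ ^ 2)⁻¹ := by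
  have hle {t : ℝ} (ht : 0 ≤ t) : ‖s‖ ≤ ‖s + t‖ :=
    (sq_le_sq₀ (norm_nonneg _) (norm_nonneg _)).1 <|
      (le_add_of_nonneg_right (sq_nonneg t)).trans (sq_norm_add_sq_le_sq_norm_add_ofReal hs ht)
  have hne {t : ℝ} (ht : 0 ≤ t) : s + t ≠ 0 :=
    norm_pos_iff.1 ((norm_pos_iff.2 hs0).trans_le (hle ht))
  have hderiv : ∀ t ∈ Icc (0 : ℝ) 1, HasDerivWithinAt
      (fun t : ℝ => Complex.log (s + t) - t * s⁻¹) ((s + t)⁻¹ - s⁻¹) (Icc 0 1) t := by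
    intro t ht
    have hmem : s + t ∈ Complex.slitPlane :=
      mem_slitPlane_of_re_nonneg (by simpa using add_nonneg hs ht.1) (hne ht.1)
    have hlin := Complex.ofRealCLM.hasDerivAt (x := t)
    simpa using! (((hlin.const_add s).clog_real hmem).sub (hlin.mul_const s⁻¹)).hasDerivWithinAt
  have hbound : ∀ t ∈ Ico (0 : ℝ) 1, ‖(s + t)⁻¹ - s⁻¹‖ ≤ (‖s‖ ^ 2)⁻¹ := by
    intro t ht
    rw [inv_sub_inv (hne ht.1) hs0, sub_add_cancel_left, norm_div, norm_neg, norm_mul,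
      Complex.norm_of_nonneg ht.1, ← one_div, sq]
    exact div_le_div₀ zero_le_one ht.2.le (mul_self_pos.2 (norm_ne_zero_iff.2 hs0))
      (mul_le_mul_of_nonneg_right (hle ht.1) (norm_nonneg s))
  simpa [sub_right_comm] using norm_image_sub_le_of_norm_deriv_le_segment_01' hderiv hbound

lemma add_natCast_ne_zero_of_re_nonneg {s : ℂ} (hs : 0 ≤ s.re) (hs0 : s ≠ 0) (j : ℕ) :
    s + j ≠ 0 := by
  intro h
  have hre : s.re + j = 0 := by simpa using congrArg Complex.re h
  have hj : j = 0 := by exact_mod_cast le_antisymm (by linarith) (Nat.cast_nonneg (α := ℝ) j)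
  exact hs0 (by simpa [hj] using h)

lemma sum_range_inv_sq_norm_add_natCast_le {s : ℂ} (hs : 0 ≤ s.re) (hs1 : 1 ≤ ‖s‖) (n : ℕ) :
    ∑ j ∈ Finset.range n, (‖s + j‖ ^ 2)⁻¹ ≤ 4 := by
  have hterm (j : ℕ) : (‖s + j‖ ^ 2)⁻¹ ≤ 2 * (((1 + j : ℕ) : ℝ) ^ 2)⁻¹ := by
    have h := sq_norm_add_sq_le_sq_norm_add_ofReal hs (Nat.cast_nonneg (α := ℝ) j)
    have hlow : ((1 + j : ℕ) : ℝ) ^ 2 / 2 ≤ ‖s + j‖ ^ 2 := by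
      push_cast at h ⊢
      nlinarith [sq_nonneg ((j : ℝ) - 1)]
    calc (‖s + j‖ ^ 2)⁻¹ ≤ (((1 + j : ℕ) : ℝ) ^ 2 / 2)⁻¹ := by gcongr
      _ = _ := by rw [inv_div, div_eq_mul_inv]
  calc ∑ j ∈ Finset.range n, (‖s + j‖ ^ 2)⁻¹
      ≤ ∑ j ∈ Finset.range n, 2 * (((1 + j : ℕ) : ℝ) ^ 2)⁻¹ :=
        Finset.sum_le_sum fun j _ => hterm j
    _ = 2 * ∑ j ∈ Finset.Ioo 0 (n + 1), ((j : ℝ) ^ 2)⁻¹ := by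
        rw [← Finset.mul_sum, ← Finset.Ico_add_one_left_eq_Ioo, Finset.sum_Ico_eq_sum_range]
        simp
    _ ≤ 4 := by
        have := sum_Ioo_inv_sq_le (α := ℝ) 0 (n + 1)
        norm_num at this ⊢
        linarith

lemma norm_sum_range_inv_sub_log_le {s : ℂ} (hs : 0 ≤ s.re) (hs1 : 1 ≤ ‖s‖) (n : ℕ) :
    ‖∑ j ∈ Finset.range n, (s + j)⁻¹ - (Complex.log (s + n) - Complex.log s)‖ ≤ 4 := by
  have hs0 : s ≠ 0 := norm_pos_iff.1 (one_pos.trans_le hs1)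
  have htel : Complex.log (s + n) - Complex.log s =
      ∑ j ∈ Finset.range n, (Complex.log (s + j + 1) - Complex.log (s + j)) := by
    simpa [add_assoc] using (Finset.sum_range_sub (fun j : ℕ => Complex.log (s + j)) n).symm
  rw [htel, ← Finset.sum_sub_distrib]
  refine (norm_sum_le_of_le _ fun j _ => ?_).trans (sum_range_inv_sq_norm_add_natCast_le hs hs1 n)
  rw [norm_sub_rev]
  exact norm_log_add_one_sub_log_sub_inv_le (by simpa using add_nonneg hs j.cast_nonneg)
    (add_natCast_ne_zero_of_re_nonneg hs hs0 j)

lemma re_mul_log_sub_log_le {u v : ℂ} (hu : 0 ≤ u.re) (hv : 0 ≤ v.re) (w : ℂ) :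
    (w * (Complex.log v - Complex.log u)).re ≤
      w.re * (Real.log ‖v‖ - Real.log ‖u‖) + ‖w‖ * π := by
  have harg : |v.arg - u.arg| ≤ π := by
    have h1 := Complex.abs_arg_le_pi_div_two_iff.2 hu
    have h2 := Complex.abs_arg_le_pi_div_two_iff.2 hv
    linarith [abs_sub v.arg u.arg]
  have him : -(w.im * (v.arg - u.arg)) ≤ ‖w‖ * π := by
    refine (neg_le_abs _).trans ?_
    rw [abs_mul]
    exact mul_le_mul (Complex.abs_im_le_norm w) harg (abs_nonneg _) (norm_nonneg _)
  simp only [Complex.mul_re, Complex.sub_re, Complex.sub_im, Complex.log_re, Complex.log_im]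
  linarith

lemma prod_norm_add_div_le {s : ℂ} (hs : 0 ≤ s.re) (hs1 : 1 ≤ ‖s‖) (w : ℂ) (n : ℕ) :
    ∏ j ∈ Finset.range n, ‖(s + w + j) / (s + j)‖ ≤
      Real.exp ((4 + π) * ‖w‖ + 2 * ‖w‖ ^ 2) * (‖s + n‖ / ‖s‖) ^ w.re := by
  have hs0 : s ≠ 0 := norm_pos_iff.1 (one_pos.trans_le hs1)
  have hne := add_natCast_ne_zero_of_re_nonneg hs hs0
  have hfactor (j : ℕ) : ‖(s + w + j) / (s + j)‖ ≤
      Real.exp ((w * (s + j)⁻¹).re + ‖w‖ ^ 2 / 2 * (‖s + j‖ ^ 2)⁻¹) := by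
    convert norm_one_add_le_exp (w * (s + j)⁻¹) using 2
    · field_simp [hne j]
      ring
    · rw [norm_mul, norm_inv]
      ring
  set L := Complex.log (s + n) - Complex.log s
  have hsum : ∑ j ∈ Finset.range n, (w * (s + j)⁻¹).re ≤ (w * L).re + 4 * ‖w‖ := by
    have h := (Complex.re_le_norm (w * (∑ j ∈ Finset.range n, (s + j)⁻¹ - L))).trans_eq
      (norm_mul _ _)
    have h' := mul_le_mul_of_nonneg_left (norm_sum_range_inv_sub_log_le hs hs1 n) (norm_nonneg w)
    rw [mul_sub, Complex.sub_re, Finset.mul_sum, Complex.re_sum] at h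
    linarith
  have hL : (w * L).re ≤ w.re * (Real.log ‖s + n‖ - Real.log ‖s‖) + ‖w‖ * π :=
    re_mul_log_sub_log_le hs (by simpa using add_nonneg hs n.cast_nonneg) w
  have hsq := mul_le_mul_of_nonneg_left (sum_range_inv_sq_norm_add_natCast_le hs hs1 n)
    (show 0 ≤ ‖w‖ ^ 2 / 2 by positivity)
  have hpos : 0 < ‖s + n‖ / ‖s‖ := div_pos (norm_pos_iff.2 (hne n)) (norm_pos_iff.2 hs0)
  calc ∏ j ∈ Finset.range n, ‖(s + w + j) / (s + j)‖
      ≤ ∏ j ∈ Finset.range n, Real.exp ((w * (s + j)⁻¹).re + ‖w‖ ^ 2 / 2 * (‖s + j‖ ^ 2)⁻¹) :=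
        Finset.prod_le_prod (fun _ _ => norm_nonneg _) fun j _ => hfactor j
    _ ≤ Real.exp ((4 + π) * ‖w‖ + 2 * ‖w‖ ^ 2 + w.re * (Real.log ‖s + n‖ - Real.log ‖s‖)) := by
        rw [← Real.exp_sum, Finset.sum_add_distrib, ← Finset.mul_sum]
        exact Real.exp_le_exp.2 (by linarith)
    _ = _ := by
        rw [Real.exp_add, Real.rpow_def_of_pos hpos, Real.log_div (norm_ne_zero_iff.2 (hne n))
          (norm_ne_zero_iff.2 hs0), mul_comm w.re]

lemma GammaSeq_div_GammaSeq_add (s w : ℂ) {n : ℕ} (hn : n ≠ 0) :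
    Complex.GammaSeq s n / Complex.GammaSeq (s + w) n =
      (n : ℂ) ^ (-w) * ∏ j ∈ Finset.range (n + 1), (s + w + j) / (s + j) := by
  have hn' : (n : ℂ) ≠ 0 := Nat.cast_ne_zero.2 hn
  have hfac : (n.factorial : ℂ) ≠ 0 := Nat.cast_ne_zero.2 n.factorial_ne_zero
  have hpow : (n : ℂ) ^ w ≠ 0 := by simp [Complex.cpow_eq_zero_iff, hn']
  have hpow' : (n : ℂ) ^ s ≠ 0 := by simp [Complex.cpow_eq_zero_iff, hn']
  rw [Complex.GammaSeq, Complex.GammaSeq, Complex.cpow_add _ _ hn', Complex.cpow_neg,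
    Finset.prod_div_distrib, div_div_div_eq]
  field_simp

theorem norm_Gamma_div_Gamma_add_le {s : ℂ} (hs : 0 ≤ s.re) (hs1 : 1 ≤ ‖s‖) (w : ℂ) :
    ‖Complex.Gamma s / Complex.Gamma (s + w)‖ ≤
      Real.exp ((4 + π) * ‖w‖ + 2 * ‖w‖ ^ 2) * ‖s‖ ^ (-w.re) := by
  rcases eq_or_ne (Complex.Gamma (s + w)) 0 with hG | hG
  · rw [hG, div_zero, norm_zero]
    positivity
  have hlim : Tendsto (fun n : ℕ => ‖s + (n + 1 : ℕ)‖ / n) atTop (𝓝 1) := by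
    have h := (((tendsto_inv_atTop_nhds_zero_nat (𝕜 := ℂ)).const_mul (s + 1)).add_const 1).norm
    rw [mul_zero, zero_add, norm_one] at h
    refine h.congr' ?_
    filter_upwards [eventually_ne_atTop 0] with n hn
    rw [← Complex.norm_natCast, ← norm_div]
    congr 1
    push_cast
    field_simp
    ring
  have hbound : Tendsto (fun n : ℕ => Real.exp ((4 + π) * ‖w‖ + 2 * ‖w‖ ^ 2) *
      ((‖s + (n + 1 : ℕ)‖ / n) ^ w.re * ‖s‖ ^ (-w.re))) atTop
      (𝓝 (Real.exp ((4 + π) * ‖w‖ + 2 * ‖w‖ ^ 2) * ‖s‖ ^ (-w.re))) := by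
    simpa using ((hlim.rpow_const (p := w.re) (by simp)).mul_const _).const_mul _
  refine le_of_tendsto_of_tendsto ((Complex.GammaSeq_tendsto_Gamma s).div
    (Complex.GammaSeq_tendsto_Gamma (s + w)) hG).norm hbound ?_
  filter_upwards [eventually_gt_atTop 0] with n hn
  have hn' : (0 : ℝ) < n := Nat.cast_pos.2 hn
  rw [Pi.div_apply, GammaSeq_div_GammaSeq_add s w hn.ne', norm_mul, norm_prod,
    Complex.norm_natCast_cpow_of_pos hn]
  calc (n : ℝ) ^ (-w).re * ∏ j ∈ Finset.range (n + 1), ‖(s + w + j) / (s + j)‖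
      ≤ (n : ℝ) ^ (-w).re * (Real.exp ((4 + π) * ‖w‖ + 2 * ‖w‖ ^ 2) *
          (‖s + (n + 1 : ℕ)‖ / ‖s‖) ^ w.re) := by
        gcongr
        exact prod_norm_add_div_le hs hs1 w (n + 1)
    _ = _ := by
        rw [Complex.neg_re, Real.rpow_neg hn'.le, Real.rpow_neg (norm_nonneg _),
          Real.div_rpow (norm_nonneg _) hn'.le, Real.div_rpow (norm_nonneg _) (norm_nonneg _)]
        ring

lemma differentiableAt_Gamma_of_re_pos {s : ℂ} (hs : 0 < s.re) :
    DifferentiableAt ℂ Complex.Gamma s := by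
  refine Complex.differentiableAt_Gamma s fun m hm => hs.not_ge ?_
  simp [hm]

theorem norm_Gamma_le {s : ℂ} (hs : 0 < s.re) : ‖Complex.Gamma s‖ ≤ Real.Gamma s.re := by
  rw [Complex.Gamma_eq_integral hs, Real.Gamma_eq_integral hs]
  refine (norm_integral_le_integral_norm _).trans_eq ?_
  refine setIntegral_congr_fun measurableSet_Ioi fun x hx => ?_
  simp [Complex.norm_cpow_eq_rpow_re_of_pos hx, Complex.norm_exp]

lemma norm_mellin_le {E : Type*} [NormedAddCommGroup E] [NormedSpace ℂ E] (f : ℝ → E) (s : ℂ) :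
    ‖mellin f s‖ ≤ ∫ x in Ioi (0 : ℝ), x ^ (s.re - 1) * ‖f x‖ := by
  refine (norm_integral_le_integral_norm _).trans_eq ?_
  refine setIntegral_congr_fun measurableSet_Ioi fun x hx => ?_
  simp [norm_smul, Complex.norm_cpow_eq_rpow_re_of_pos hx]

lemma hasMellin_exp_neg {s : ℂ} (hs : 0 < s.re) :
    HasMellin (fun x : ℝ => Complex.exp (-(x : ℂ))) s (Complex.Gamma s) := by
  refine ⟨?_, ?_⟩
  · simpa [MellinConvergent, mul_comm] using Complex.GammaIntegral_convergent hs
  · simp [Complex.Gamma_eq_integral hs, Complex.GammaIntegral_eq_mellin]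

lemma hasMellin_one_sub_cpow {z s : ℂ} (hz : -1 < z.re) (hs : 0 < s.re) :
    HasMellin (fun x : ℝ => if x < 1 then ((1 - x : ℝ) : ℂ) ^ z else 0) s
      (Complex.betaIntegral s (z + 1)) := by
  have hint : EqOn
      ((Ioo 0 1).indicator fun x : ℝ => (x : ℂ) ^ (s - 1) * (1 - (x : ℂ)) ^ (z + 1 - 1))
      (fun x : ℝ => (x : ℂ) ^ (s - 1) • if x < 1 then ((1 - x : ℝ) : ℂ) ^ z else 0) (Ioi 0) := by
    intro x hx
    simp [indicator, mem_Ioi.1 hx]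
  constructor
  · have hbeta := Complex.betaIntegral_convergent hs (v := z + 1) (by simpa using by linarith)
    rw [intervalIntegrable_iff_integrableOn_Ioo_of_le zero_le_one] at hbeta
    exact ((integrable_indicator_iff measurableSet_Ioo).2 hbeta).integrableOn.congr_fun hint
      measurableSet_Ioi
  · rw [mellin, ← setIntegral_congr_fun measurableSet_Ioi hint,
      setIntegral_indicator measurableSet_Ioo, inter_eq_right.2 Ioo_subset_Ioi_self,
      ← integral_Ioc_eq_integral_Ioo, ← intervalIntegral.integral_of_le zero_le_one,
      Complex.betaIntegral]

lemma hasMellin_rieszM_of_re_pos {z s : ℂ} (hz : -1 < z.re) (hs : 0 < s.re) :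
    HasMellin (rieszM z) s
      (Complex.Gamma s * (Complex.Gamma (z + 1) / Complex.Gamma (s + (z + 1)) - 1)) := by
  obtain ⟨hconv₁, heq₁⟩ := hasMellin_one_sub_cpow hz hs
  obtain ⟨hconv₂, heq₂⟩ := hasMellin_exp_neg hs
  have hbeta := Complex.betaIntegral_eq_Gamma_mul_div s (z + 1) hs (by simpa using by linarith)
  have hval : Complex.Gamma s * (Complex.Gamma (z + 1) / Complex.Gamma (s + (z + 1)) - 1) =
      Complex.betaIntegral s (z + 1) - Complex.Gamma s := by
    rw [hbeta]
    ring
  rw [hval, ← heq₁, ← heq₂]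
  exact hasMellin_sub hconv₁ hconv₂

lemma locallyIntegrableOn_rieszM {z : ℂ} (hz : -1 < z.re) :
    LocallyIntegrableOn (rieszM z) (Ioi 0) := by
  have h := (hasMellin_rieszM_of_re_pos hz (s := 1) (by simp)).1
  simp only [MellinConvergent, sub_self, Complex.cpow_zero, one_smul] at h
  exact h.locallyIntegrableOn

lemma rieszM_isBigO_atTop (z : ℂ) :
    rieszM z =O[atTop] fun x : ℝ => Real.exp (-1 * x) := by
  refine IsBigO.of_bound 1 ?_
  filter_upwards [eventually_ge_atTop 1] with x hx
  simp [rieszM, hx.not_gt, Complex.norm_exp]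

lemma differentiableAt_rieszM (z : ℂ) {x : ℝ} (hx : x < 1) : DifferentiableAt ℝ (rieszM z) x := by
  have hmem : 1 - (x : ℂ) ∈ Complex.slitPlane := by
    exact_mod_cast Complex.ofReal_mem_slitPlane.2 (sub_pos.2 hx)
  have hsmooth : DifferentiableAt ℂ (fun s : ℂ => (1 - s) ^ z - Complex.exp (-s)) x :=
    ((differentiableAt_id.const_sub 1).cpow_const hmem).sub (by fun_prop)
  refine hsmooth.hasDerivAt.comp_ofReal.differentiableAt.congr_of_eventuallyEq ?_
  filter_upwards [Iio_mem_nhds hx] with y hy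
  simp [rieszM, mem_Iio.1 hy]

lemma rieszM_isBigO_zero (z : ℂ) : rieszM z =O[𝓝[>] 0] fun x : ℝ => x ^ (-(-1 : ℝ)) := by
  have h := (differentiableAt_rieszM z one_pos).isBigO_sub.mono (nhdsWithin_le_nhds (s := Ioi 0))
  have h0 : rieszM z 0 = 0 := by simp [rieszM]
  simpa [h0] using h

lemma mellinConvergent_rieszM {z s : ℂ} (hz : -1 < z.re) (hs : -1 < s.re) :
    MellinConvergent (rieszM z) s :=
  mellinConvergent_of_isBigO_rpow_exp one_pos (locallyIntegrableOn_rieszM hz)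
    (rieszM_isBigO_atTop z) (rieszM_isBigO_zero z) hs

lemma differentiableAt_mellin_rieszM {z s : ℂ} (hz : -1 < z.re) (hs : -1 < s.re) :
    DifferentiableAt ℂ (mellin (rieszM z)) s :=
  mellin_differentiableAt_of_isBigO_rpow_exp one_pos (locallyIntegrableOn_rieszM hz)
    (rieszM_isBigO_atTop z) (rieszM_isBigO_zero z) hs

lemma mul_mellin_rieszM {z s : ℂ} (hz : -1 < z.re) (hs : -1 < s.re) :
    s * mellin (rieszM z) s =
      Complex.Gamma (s + 1) * (Complex.Gamma (z + 1) * (Complex.Gamma (s + (z + 1)))⁻¹ - 1) := by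
  have hopen (a : ℝ) : IsOpen {s : ℂ | a < s.re} := isOpen_lt continuous_const Complex.continuous_re
  have hleft : AnalyticOnNhd ℂ (fun s => s * mellin (rieszM z) s) {s | -1 < s.re} :=
    DifferentiableOn.analyticOnNhd (fun s hs => (differentiableAt_id.mul
      (differentiableAt_mellin_rieszM hz hs)).differentiableWithinAt) (hopen _)
  have hright : AnalyticOnNhd ℂ (fun s => Complex.Gamma (s + 1) *
      (Complex.Gamma (z + 1) * (Complex.Gamma (s + (z + 1)))⁻¹ - 1)) {s | -1 < s.re} := by
    refine DifferentiableOn.analyticOnNhd (fun s hs => ?_) (hopen _)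
    have hGamma : DifferentiableAt ℂ Complex.Gamma (s + 1) :=
      differentiableAt_Gamma_of_re_pos (by simpa using neg_lt_iff_pos_add.1 hs)
    have hinv : DifferentiableAt ℂ (fun s => (Complex.Gamma (s + (z + 1)))⁻¹) s :=
      differentiableAt_comp_add_const.2 (Complex.differentiable_one_div_Gamma _)
    exact ((differentiableAt_comp_add_const.2 hGamma).mul
      ((hinv.const_mul (Complex.Gamma (z + 1))).sub_const 1)).differentiableWithinAt
  refine hleft.eqOn_of_preconnected_of_eventuallyEq hright
    (convex_halfSpace_re_gt _).isPreconnected (z₀ := 1) (by simp) ?_ hs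
  filter_upwards [(hopen 0).mem_nhds (by simp : (0 : ℝ) < (1 : ℂ).re)] with s hs
  have hs0 : s ≠ 0 := fun h => by simp [h] at hs
  rw [(hasMellin_rieszM_of_re_pos hz hs).2, Complex.Gamma_add_one s hs0, div_eq_mul_inv, mul_assoc]

theorem mellin_rieszM {z s : ℂ} (hz : -1 < z.re) (hs : -1 < s.re) (hs0 : s ≠ 0) :
    mellin (rieszM z) s =
      Complex.Gamma s * (Complex.Gamma (z + 1) / Complex.Gamma (s + (z + 1)) - 1) := by
  refine mul_left_cancel₀ hs0 ?_
  rw [mul_mellin_rieszM hz hs, Complex.Gamma_add_one s hs0, div_eq_mul_inv, mul_assoc]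

theorem norm_mellin_rieszM_le {z s : ℂ} (hz : -1 < z.re) (hs : 0 ≤ s.re) (hs1 : 1 ≤ ‖s‖) :
    ‖mellin (rieszM z) s‖ ≤
      Real.exp ((4 + π) * ‖z + 1‖ + 2 * ‖z + 1‖ ^ 2) *
        (Real.Gamma (z.re + 1) + Real.Gamma (s.re + (z.re + 1))) * ‖s‖ ^ (-(z.re + 1)) := by
  have hre : (z + 1).re = z.re + 1 := by simp
  have hre' : (s + (z + 1)).re = s.re + (z.re + 1) := by simp
  have hw : 0 < (z + 1).re := by linarith
  have hsw : 0 < (s + (z + 1)).re := by linarith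
  have hG := Complex.Gamma_ne_zero_of_re_pos hsw
  calc ‖mellin (rieszM z) s‖
      = ‖Complex.Gamma s / Complex.Gamma (s + (z + 1))‖ *
          ‖Complex.Gamma (z + 1) - Complex.Gamma (s + (z + 1))‖ := by
        rw [mellin_rieszM hz (by linarith) (norm_pos_iff.1 (by linarith)), ← norm_mul]
        congr 1
        field_simp
    _ ≤ (Real.exp ((4 + π) * ‖z + 1‖ + 2 * ‖z + 1‖ ^ 2) * ‖s‖ ^ (-(z + 1).re)) *
          (Real.Gamma (z + 1).re + Real.Gamma (s + (z + 1)).re) := by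
        gcongr
        · exact norm_Gamma_div_Gamma_add_le hs hs1 (z + 1)
        · exact norm_sub_le_of_le (norm_Gamma_le hw) (norm_Gamma_le hsw)
    _ = _ := by
        rw [hre, hre']
        ring

lemma le_mul_one_add_rpow_neg {A B a t y : ℝ} (ha : 0 ≤ a) (hy : 0 ≤ y) (hB : 0 ≤ B)
    (hsmall : t ≤ A) (hlarge : 1 ≤ y → t ≤ B * y ^ (-a)) :
    t ≤ max A B * 2 ^ a * (1 + y) ^ (-a) := by
  have hmax : t ≤ max A B * max 1 y ^ (-a) := by
    rcases le_total y 1 with h | h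
    · rw [max_eq_left h, Real.one_rpow, mul_one]
      exact hsmall.trans (le_max_left _ _)
    · rw [max_eq_right h]
      exact (hlarge h).trans (by gcongr; exact le_max_right _ _)
  have hcomp : max 1 y ^ (-a) ≤ 2 ^ a * (1 + y) ^ (-a) := by
    calc max 1 y ^ (-a) ≤ ((1 + y) / 2) ^ (-a) :=
          Real.rpow_le_rpow_of_nonpos (by positivity)
            (by linarith [le_max_left 1 y, le_max_right 1 y]) (neg_nonpos.2 ha)
      _ = 2 ^ a * (1 + y) ^ (-a) := by
          rw [Real.div_rpow (by positivity) zero_le_two, Real.rpow_neg zero_le_two, div_inv_eq_mul,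
            mul_comm]
  rw [mul_assoc]
  exact hmax.trans (by gcongr)

lemma eqOn_rieszM_mul_exp (z s : ℂ) :
    EqOn (fun x : ℝ => rieszM z x * Complex.exp ((s - 1) * Real.log x))
      (fun x : ℝ => (x : ℂ) ^ (s - 1) • rieszM z x) (Ioi 0) := by
  intro x hx
  beta_reduce
  rw [Complex.cpow_def_of_ne_zero (Complex.ofReal_ne_zero.2 (ne_of_gt hx)),
    ← Complex.ofReal_log (le_of_lt hx), smul_eq_mul, mul_comm, mul_comm (s - 1)]

theorem exists_norm_mellin_rieszM_le {z : ℂ} (hz : -1 < z.re) {σ : ℝ} (hσ : 0 ≤ σ) :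
    ∃ C : ℝ, 0 < C ∧ ∀ s : ℂ, s.re = σ →
      ‖mellin (rieszM z) s‖ ≤ C * (1 + |s.im|) ^ (-(z.re + 1)) := by
  have ha : 0 < z.re + 1 := by linarith
  set A := ∫ x in Ioi (0 : ℝ), x ^ (σ - 1) * ‖rieszM z x‖
  set B := Real.exp ((4 + π) * ‖z + 1‖ + 2 * ‖z + 1‖ ^ 2) *
    (Real.Gamma (z.re + 1) + Real.Gamma (σ + (z.re + 1)))
  have hB : 0 < B := mul_pos (Real.exp_pos _) <|
    add_pos (Real.Gamma_pos_of_pos ha) (Real.Gamma_pos_of_pos (by linarith))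
  refine ⟨max A B * 2 ^ (z.re + 1), mul_pos (lt_max_of_lt_right hB) (by positivity),
    fun s hs => ?_⟩
  refine le_mul_one_add_rpow_neg ha.le (abs_nonneg s.im) hB.le ?_ fun him => ?_
  · simpa only [hs] using norm_mellin_le (rieszM z) s
  · have himnorm : |s.im| ≤ ‖s‖ := Complex.abs_im_le_norm s
    have hbound := norm_mellin_rieszM_le hz (hs ▸ hσ) (him.trans himnorm)
    rw [hs] at hbound
    refine hbound.trans ?_
    gcongr ?_ * ?_
    exact Real.rpow_le_rpow_of_nonpos (by linarith) himnorm (by linarith)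

theorem rieszM_mellin_bound_general (z : ℂ) (hz : -1 < z.re) :
    (∀ γ : ℝ, IntegrableOn
      (fun x : ℝ => rieszM z x * Complex.exp ((-(Complex.I * γ) - 1) * Real.log x))
      (Set.Ioi 0)) ∧
    ∃ c : ℝ, 0 < c ∧ ∀ γ : ℝ,
      ‖((2 * π : ℝ) : ℂ)⁻¹ * ∫ x in Set.Ioi (0 : ℝ),
          rieszM z x * Complex.exp ((-(Complex.I * γ) - 1) * Real.log x)‖ ≤
        c * (1 + |γ|) ^ (-(z.re + 1)) := by
  have hmellin (γ : ℝ) := eqOn_rieszM_mul_exp z (-(Complex.I * γ))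
  obtain ⟨C, hC, hbound⟩ := exists_norm_mellin_rieszM_le hz le_rfl
  refine ⟨fun γ => (integrableOn_congr_fun (hmellin γ) measurableSet_Ioi).2
    (mellinConvergent_rieszM hz (by simp)), (2 * π)⁻¹ * C, by positivity, fun γ => ?_⟩
  rw [setIntegral_congr_fun measurableSet_Ioi (hmellin γ), ← mellin, norm_mul, norm_inv,
    Complex.norm_of_nonneg two_pi_pos.le, mul_assoc]
  gcongr
  simpa using hbound (-(Complex.I * γ)) (by simp)

/-- For Re z > 0, the Mellin-type integral ℳ(γ) = (2π)^{−1} ∫_0^∞ M(ξ) ξ^{−iγ−1} dξ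
converges absolutely for every γ, and |ℳ(γ)| ≤ c (1 + |γ|)^{−(Re z + 1)}. -/
theorem rieszM_mellin_bound (z : ℂ) (hz : 0 < z.re) :
    (∀ γ : ℝ, IntegrableOn
      (fun x : ℝ => rieszM z x * Complex.exp ((-(Complex.I * γ) - 1) * Real.log x))
      (Set.Ioi 0)) ∧
    ∃ c : ℝ, 0 < c ∧ ∀ γ : ℝ,
      ‖((2 * π : ℝ) : ℂ)⁻¹ * ∫ x in Set.Ioi (0 : ℝ),
          rieszM z x * Complex.exp ((-(Complex.I * γ) - 1) * Real.log x)‖ ≤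
        c * (1 + |γ|) ^ (-(z.re + 1)) :=
  rieszM_mellin_bound_general z (by linarith)
end

section
/- For every integer a ≥ 1 there exist complex constants c^a_j (1 ≤ j ≤ ⌊a/2⌋), independent of ν, such that for every ν ∈ ℂ with Re ν > −1/2 and every t ∈ ℝ, the a-th derivative of 𝒥_ν satisfies 𝒥_ν^{(a)}(t) = (−1)^a t^a 𝒥_{ν+a}(t) + Σ_{j=1}^{⌊a/2⌋} c^a_j t^{a−2j} 𝒥_{ν+a−j}(t). -/
/-!
Differentiating the Poisson integral under the integral sign and integrating by parts against
`s (1 - s²)^(ν - 1/2)` gives the ladder relation `𝒥_ν' = -t 𝒥_{ν+1}`. The function `exp (-t²/2)`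
satisfies the same relation with all orders identified, and its derivatives are
`(-1)ⁿ Heₙ(t) exp (-t²/2)`. The recursion `Heₙ₊₁ = X Heₙ - Heₙ'` behind this still holds when the
orders are kept apart, the term `t^k` of `Heₙ` being attached to the order `ν + (n + k) / 2`; so the
constants are, up to sign, the coefficients of the Hermite polynomials.
-/

open Real MeasureTheory

/-- 𝒥_ν(t) = (2^ν Γ(ν+1/2) Γ(1/2))^{−1} ∫_{−1}^1 e^{ist} (1−s²)^{ν−1/2} ds,
which for t > 0 equals t^{−ν} J_ν(t). -/
noncomputable def Jmod (ν : ℂ) (t : ℝ) : ℂ :=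
  ((2 : ℂ) ^ ν * Complex.Gamma (ν + 1 / 2) * Complex.Gamma (1 / 2))⁻¹ *
    ∫ s in (-1 : ℝ)..1, Complex.exp (Complex.I * s * t) * ((1 - s ^ 2 : ℝ) : ℂ) ^ (ν - 1 / 2)

section LadderRelation

open Polynomial

variable {𝕜 E : Type*} [NontriviallyNormedField 𝕜] [NormedAddCommGroup E] [NormedSpace 𝕜 E]

/-- The evaluation at `t` of an integer polynomial along a sequence of functions `F`, in which
`X ^ k` stands for `t ^ k • F ((n + k) / 2) t`. It is meant for polynomials with the parity of `n`,
for which the division is exact; the rounding on the others is harmless, since differentiation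
(`n` becoming `n + 1`) changes `k` by one and so `n + k` by an even number. -/
noncomputable def ladderEval (F : ℕ → 𝕜 → E) (n : ℕ) (t : 𝕜) : ℤ[X] →ₗ[ℤ] E :=
  lsum fun k => LinearMap.toSpanSingleton ℤ E (t ^ k • F ((n + k) / 2) t)

lemma ladderEval_monomial (F : ℕ → 𝕜 → E) (n : ℕ) (t : 𝕜) (k : ℕ) (c : ℤ) :
    ladderEval F n t (monomial k c) = c • t ^ k • F ((n + k) / 2) t := by
  simp [ladderEval, lsum_apply, sum_monomial_index]

lemma ladderEval_hermite (F : ℕ → 𝕜 → E) (n : ℕ) (t : 𝕜) :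
    ladderEval F n t (hermite n) =
      ∑ j ∈ Finset.range (n / 2 + 1), (hermite n).coeff (n - 2 * j) •
        t ^ (n - 2 * j) • F (n - j) t := by
  have expansion : ladderEval F n t (hermite n) =
      ∑ k ∈ Finset.range (n + 1), (hermite n).coeff k • t ^ k • F ((n + k) / 2) t := by
    conv_lhs => rw [as_sum_range (hermite n), natDegree_hermite]
    simp only [map_sum, ladderEval_monomial]
  rw [expansion]
  refine (Finset.sum_of_injOn (fun j => n - 2 * j) ?_ ?_ ?_ ?_).symm
  · intro i hi j hj hij
    simp only [Finset.coe_range, Set.mem_Iio] at hi hj hij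
    omega
  · intro j _
    simp only [Finset.coe_range, Set.mem_Iio]
    omega
  · intro k hk hk'
    have odd_add : Odd (n + k) := by
      by_contra h
      obtain ⟨m, hm⟩ := Nat.not_odd_iff_even.1 h
      rw [Finset.mem_range] at hk
      refine hk' ⟨n - m, ?_, ?_⟩
      · simp only [Finset.coe_range, Set.mem_Iio]
        omega
      · dsimp only
        omega
    rw [coeff_hermite_of_odd_add odd_add, zero_smul]
  · intro j hj
    rw [Finset.mem_range] at hj
    rw [show (n + (n - 2 * j)) / 2 = n - j by omega]

lemma hasDerivAt_ladderEval {F : ℕ → 𝕜 → E}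
    (hF : ∀ m t, HasDerivAt (F m) (-(t • F (m + 1) t)) t) (n : ℕ) (p : ℤ[X]) (t : 𝕜) :
    HasDerivAt (fun t => ladderEval F n t p)
      (ladderEval F (n + 1) t (derivative p - X * p)) t := by
  induction p using Polynomial.induction_on' with
  | add p q hp hq =>
    rw [derivative_add, mul_add, add_sub_add_comm]
    simpa only [map_add] using hp.fun_add hq
  | monomial k c =>
    simp only [derivative_monomial, X_mul_monomial, map_sub, ladderEval_monomial]
    refine (((hasDerivAt_pow k t).smul (hF ((n + k) / 2) t)).const_smul c).congr_deriv ?_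
    have raise : (n + 1 + (k + 1)) / 2 = (n + k) / 2 + 1 := by omega
    cases k with
    | zero => simp [raise]
    | succ k =>
      rw [raise, show (n + 1 + (k + 1 - 1)) / 2 = (n + (k + 1)) / 2 by congr 1; omega]
      simp only [← Int.cast_smul_eq_zsmul 𝕜]
      push_cast
      module

theorem iteratedDeriv_eq_ladderEval_hermite {F : ℕ → 𝕜 → E}
    (hF : ∀ m t, HasDerivAt (F m) (-(t • F (m + 1) t)) t) (n : ℕ) :
    iteratedDeriv n (F 0) = fun t => (-1 : ℤ) ^ n • ladderEval F n t (hermite n) := by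
  induction n with
  | zero =>
    ext t
    rw [hermite_zero, ← monomial_zero_left, ladderEval_monomial]
    simp
  | succ n ih =>
    ext t
    rw [iteratedDeriv_succ, ih,
      ((hasDerivAt_ladderEval hF n (hermite n) t).fun_const_smul ((-1 : ℤ) ^ n)).deriv,
      hermite_succ, ← neg_sub, map_neg, pow_succ, mul_neg_one, neg_smul, smul_neg]

end LadderRelation

section PoissonIntegral

open Complex

lemma hasDerivAt_cexp_const_mul_ofReal (c : ℂ) (x : ℝ) :
    HasDerivAt (fun x : ℝ => cexp (c * x)) (c * cexp (c * x)) x := by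
  simpa [mul_comm] using ((hasDerivAt_id (x : ℂ)).const_mul c).cexp.comp_ofReal

lemma hasDerivAt_integral_cexp_mul {w : ℝ → ℂ} {a b : ℝ} (hw : IntervalIntegrable w volume a b)
    (t : ℝ) :
    HasDerivAt (fun t : ℝ => ∫ s in a..b, cexp (I * s * t) * w s)
      (∫ s in a..b, I * s * cexp (I * s * t) * w s) t := by
  have integrable (t : ℝ) : IntervalIntegrable (fun s : ℝ => cexp (I * s * t) * w s) volume a b :=
    hw.continuousOn_mul (by fun_prop)
  have integrable_deriv :
      IntervalIntegrable (fun s : ℝ => I * s * cexp (I * s * t) * w s) volume a b :=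
    hw.continuousOn_mul (by fun_prop)
  have integrable_bound : IntervalIntegrable (fun s : ℝ => ‖(s : ℂ) * w s‖) volume a b :=
    (hw.continuousOn_mul (by fun_prop)).norm
  refine (intervalIntegral.hasDerivAt_integral_of_dominated_loc_of_deriv_le
    (F' := fun (t : ℝ) s => I * s * cexp (I * s * t) * w s)
    Filter.univ_mem (.of_forall fun t => (integrable t).def'.aestronglyMeasurable) (integrable t)
    integrable_deriv.def'.aestronglyMeasurable (.of_forall fun s _ x _ => ?_) integrable_bound
    (.of_forall fun s _ x _ => (hasDerivAt_cexp_const_mul_ofReal (I * s) x).mul_const (w s))).2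
  have norm_cexp : ‖cexp (I * s * x)‖ = 1 := by
    rw [mul_assoc, ← ofReal_mul, norm_exp_I_mul_ofReal]
  simp [norm_cexp]

lemma intervalIntegrable_one_sub_sq_cpow {μ : ℂ} (hμ : -1 < μ.re) :
    IntervalIntegrable (fun s : ℝ => ((1 - s ^ 2 : ℝ) : ℂ) ^ μ) volume (-1) 1 := by
  have beta : IntervalIntegrable (fun x : ℝ => (x : ℂ) ^ μ * (1 - x : ℂ) ^ μ) volume 0 1 := by
    have hre : 0 < (μ + 1).re := by rw [add_re, one_re]; linarith
    simpa only [add_sub_cancel_right] using betaIntegral_convergent hre hre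
  have rescaled : IntervalIntegrable
      (fun s : ℝ => ((1 / 2 * (1 + s) : ℝ) : ℂ) ^ μ * ((1 / 2 * (1 - s) : ℝ) : ℂ) ^ μ)
      volume (-1) 1 := by
    convert (beta.comp_mul_left (c := 1 / 2)).comp_add_right 1 using 1
    · ext s
      congr 2 <;> push_cast <;> ring
    all_goals norm_num
  refine (rescaled.const_mul ((4 : ℝ) ^ μ : ℂ)).congr_uIoo fun s hs => ?_
  rw [Set.uIoo_of_le (by norm_num)] at hs
  obtain ⟨neg_one_lt, lt_one⟩ := hs
  dsimp only
  rw [← mul_cpow_ofReal_nonneg (by linarith) (by linarith), ← ofReal_mul,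
    ← mul_cpow_ofReal_nonneg (by norm_num) (by nlinarith), ← ofReal_mul]
  congr 2
  ring

lemma continuous_one_sub_sq_cpow {μ : ℂ} (hμ : 0 < μ.re) :
    Continuous fun s : ℝ => ((1 - s ^ 2 : ℝ) : ℂ) ^ μ :=
  (continuous_ofReal_cpow_const hμ).comp (f := fun s : ℝ => 1 - s ^ 2) (by fun_prop)

lemma hasDerivAt_one_sub_sq_cpow {μ : ℂ} (hμ : μ ≠ -1) {s : ℝ} (hs : 1 - s ^ 2 ≠ 0) :
    HasDerivAt (fun s : ℝ => -(2 * (μ + 1))⁻¹ * ((1 - s ^ 2 : ℝ) : ℂ) ^ (μ + 1))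
      (s * ((1 - s ^ 2 : ℝ) : ℂ) ^ μ) s := by
  have inner : HasDerivAt (fun s : ℝ => 1 - s ^ 2) (-(2 * s)) s := by
    simpa using (hasDerivAt_pow 2 s).const_sub 1
  have scaled := ((hasDerivAt_ofReal_cpow_const' hs hμ).scomp s inner).const_mul (-(1 / 2 : ℂ))
  refine (scaled.congr_of_eventuallyEq (.of_forall fun s => ?_)).congr_deriv ?_
  · simp only [Function.comp_apply, mul_inv]
    ring
  · simp only [real_smul, ofReal_neg, ofReal_mul, ofReal_ofNat]
    ring

lemma integral_mul_id_mul_one_sub_sq_cpow {μ : ℂ} (hμ : -1 < μ.re) {u u' : ℝ → ℂ}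
    (hu : ContinuousOn u (Set.Icc (-1) 1))
    (huu' : ∀ s ∈ Set.Ioo (-1 : ℝ) 1, HasDerivAt u (u' s) s)
    (hu' : IntervalIntegrable u' volume (-1) 1) :
    ∫ s in (-1 : ℝ)..1, u s * (s * ((1 - s ^ 2 : ℝ) : ℂ) ^ μ) =
      (2 * (μ + 1))⁻¹ * ∫ s in (-1 : ℝ)..1, u' s * ((1 - s ^ 2 : ℝ) : ℂ) ^ (μ + 1) := by
  have hre : 0 < (μ + 1).re := by rw [add_re, one_re]; linarith
  have hne : μ + 1 ≠ 0 := fun h => by simp [h] at hre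
  have one_sub_sq_ne_zero : ∀ s ∈ Set.Ioo (-1 : ℝ) 1, 1 - s ^ 2 ≠ 0 := fun s hs => by
    nlinarith [hs.1, hs.2]
  have parts := intervalIntegral.integral_mul_deriv_eq_deriv_mul_of_hasDerivAt
    (a := -1) (b := 1) (u := u) (u' := u')
    (v := fun s : ℝ => -(2 * (μ + 1))⁻¹ * ((1 - s ^ 2 : ℝ) : ℂ) ^ (μ + 1))
    (v' := fun s : ℝ => s * ((1 - s ^ 2 : ℝ) : ℂ) ^ μ)
    (by rwa [Set.uIcc_of_le (by norm_num)])
    (continuous_const.mul (continuous_one_sub_sq_cpow hre)).continuousOn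
    (by simpa using huu')
    (fun s hs => hasDerivAt_one_sub_sq_cpow (fun h => hne (by simp [h]))
      (one_sub_sq_ne_zero s (by simpa using hs)))
    hu' ((intervalIntegrable_one_sub_sq_cpow hμ).continuousOn_mul (by fun_prop))
  rw [parts, ← intervalIntegral.integral_const_mul]
  simp only [one_pow, even_two.neg_pow, sub_self, ofReal_zero, zero_cpow hne, mul_zero, zero_sub,
    ← intervalIntegral.integral_neg]
  congr 1 with s
  ring

lemma hasDerivAt_integral_cexp_mul_one_sub_sq_cpow {μ : ℂ} (hμ : -1 < μ.re) (t : ℝ) :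
    HasDerivAt (fun t : ℝ => ∫ s in (-1 : ℝ)..1, cexp (I * s * t) * ((1 - s ^ 2 : ℝ) : ℂ) ^ μ)
      (-t / (2 * (μ + 1)) *
        ∫ s in (-1 : ℝ)..1, cexp (I * s * t) * ((1 - s ^ 2 : ℝ) : ℂ) ^ (μ + 1)) t := by
  refine (hasDerivAt_integral_cexp_mul (intervalIntegrable_one_sub_sq_cpow hμ) t).congr_deriv ?_
  have hasDerivAt_cexp (s : ℝ) :
      HasDerivAt (fun s : ℝ => I * cexp (I * s * t)) (-t * cexp (I * s * t)) s := by
    have swapped := (hasDerivAt_cexp_const_mul_ofReal (I * t) s).const_mul I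
    simp only [mul_right_comm I (t : ℂ)] at swapped
    refine swapped.congr_deriv ?_
    linear_combination t * cexp (I * s * t) * I_sq
  calc ∫ s in (-1 : ℝ)..1, I * s * cexp (I * s * t) * ((1 - s ^ 2 : ℝ) : ℂ) ^ μ
      = ∫ s in (-1 : ℝ)..1, I * cexp (I * s * t) * (s * ((1 - s ^ 2 : ℝ) : ℂ) ^ μ) := by
        congr 1 with s
        ring
    _ = (2 * (μ + 1))⁻¹ *
          ∫ s in (-1 : ℝ)..1, -t * cexp (I * s * t) * ((1 - s ^ 2 : ℝ) : ℂ) ^ (μ + 1) :=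
        integral_mul_id_mul_one_sub_sq_cpow hμ (by fun_prop) (fun s _ => hasDerivAt_cexp s)
          (Continuous.intervalIntegrable (by fun_prop) _ _)
    _ = _ := by
        simp only [mul_assoc, intervalIntegral.integral_const_mul]
        ring

end PoissonIntegral

theorem hasDerivAt_Jmod {ν : ℂ} (hν : -(1 / 2) < ν.re) (t : ℝ) :
    HasDerivAt (Jmod ν) (-(t • Jmod (ν + 1) t)) t := by
  have hμ : -1 < (ν - 1 / 2).re := by simp; linarith
  have hne : ν + 1 / 2 ≠ 0 := fun h => by
    norm_num [eq_neg_of_add_eq_zero_left h] at hν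
  refine ((hasDerivAt_integral_cexp_mul_one_sub_sq_cpow hμ t).const_mul _).congr_deriv ?_
  rw [Jmod, Complex.real_smul, show ν + 1 + 1 / 2 = ν + 1 / 2 + 1 by ring,
    show ν + 1 - 1 / 2 = ν + 1 / 2 by ring, show ν - 1 / 2 + 1 = ν + 1 / 2 by ring,
    Complex.Gamma_add_one _ hne, Complex.cpow_add _ _ two_ne_zero, Complex.cpow_one]
  simp only [mul_inv, div_eq_mul_inv]
  ring

theorem iteratedDeriv_Jmod {ν : ℂ} (hν : -(1 / 2) < ν.re) (n : ℕ) (t : ℝ) :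
    iteratedDeriv n (Jmod ν) t = (-1) ^ n * ∑ j ∈ Finset.range (n / 2 + 1),
      ((Polynomial.hermite n).coeff (n - 2 * j) : ℂ) * (t : ℂ) ^ (n - 2 * j) *
        Jmod (ν + n - j) t := by
  have ladder (m : ℕ) (t : ℝ) :
      HasDerivAt (Jmod (ν + m)) (-(t • Jmod (ν + (m + 1 : ℕ)) t)) t := by
    have hre : -(1 / 2) < (ν + m).re := by
      rw [Complex.add_re, Complex.natCast_re]
      linarith [m.cast_nonneg (α := ℝ)]
    simpa [add_assoc] using hasDerivAt_Jmod hre t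
  have formula :=
    congrFun (iteratedDeriv_eq_ladderEval_hermite (F := fun m => Jmod (ν + m)) ladder n) t
  simp only [Nat.cast_zero, add_zero] at formula
  rw [formula, ladderEval_hermite, zsmul_eq_mul, Int.cast_pow, Int.cast_neg, Int.cast_one]
  congr 1
  refine Finset.sum_congr rfl fun j hj => ?_
  have hj : j ≤ n := by grind
  rw [Nat.cast_sub hj, add_sub_assoc, zsmul_eq_mul, Complex.real_smul, Complex.ofReal_pow,
    mul_assoc]

/-- For every a ≥ 1 there are complex constants c^a_j (1 ≤ j ≤ ⌊a/2⌋), independent of ν,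
such that 𝒥_ν^{(a)}(t) = (−1)^a t^a 𝒥_{ν+a}(t) + Σ_{j=1}^{⌊a/2⌋} c^a_j t^{a−2j} 𝒥_{ν+a−j}(t)
for every ν with Re ν > −1/2 and every t ∈ ℝ. -/
theorem Jmod_iteratedDeriv (a : ℕ) (ha : 1 ≤ a) :
    ∃ c : ℕ → ℂ, ∀ ν : ℂ, -(1 / 2) < ν.re → ∀ t : ℝ,
      iteratedDeriv a (Jmod ν) t =
        (-1) ^ a * (t : ℂ) ^ a * Jmod (ν + a) t +
          ∑ j ∈ Finset.Icc 1 (a / 2), c j * (t : ℂ) ^ (a - 2 * j) * Jmod (ν + a - j) t := by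
  refine ⟨fun j => (-1) ^ a * (Polynomial.hermite a).coeff (a - 2 * j), fun ν hν t => ?_⟩
  rw [iteratedDeriv_Jmod hν, Finset.range_eq_Ico, Finset.sum_eq_sum_Ico_succ_bot (by omega),
    mul_add, Finset.mul_sum]
  simp [mul_assoc, Finset.Ico_add_one_right_eq_Icc]
end

section
/- Let μ ∈ ℂ with Re μ > −1/2. There exists a constant c_μ > 0 such that |𝒥_μ(t)| ≤ c_μ t^{−(Re μ + 1/2)} for all t > 0. -/
open Real MeasureTheory

open Set Filter Asymptotics
open scoped Interval

/-! The Poisson integral `f t = ∫ e^{ist} (1 - s²)^α ds` solves `t f'' + 2 (α + 1) f' + t f = 0`: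
since `(1 - s²) (1 - s²)^α = (1 - s²)^(α + 1)`, the sum `f + f''` is the Poisson integral of
exponent `α + 1`, and one integration by parts turns `t (f + f'')` into a multiple of `f'`. The
substitution `u = t^(α + 1) f` removes the first-order term and leaves
`u'' + u = α (α + 1) t⁻² u`, a perturbation of the harmonic oscillator which is integrable at
infinity. Hence the energy `|u|² + |u'|²` stays bounded, so `f = O(t^(-Re α - 1))` at infinity, and
`f` itself is bounded near `0`. -/

lemma isBigO_principal_Ioi_rpow_neg {E : Type*} [SeminormedAddCommGroup E] {f : ℝ → E} {r : ℝ}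
    (hr : 0 ≤ r) (hbounded : f =O[𝓟 (Ioi 0)] fun _ ↦ (1 : ℝ))
    (hf : f =O[atTop] fun t ↦ t ^ (-r)) : f =O[𝓟 (Ioi 0)] fun t ↦ t ^ (-r) := by
  obtain ⟨M, hM0, hM⟩ := hbounded.exists_pos
  obtain ⟨C, hbound⟩ := hf.bound
  obtain ⟨T, hT⟩ := eventually_atTop.1 hbound
  refine isBigO_principal.2 ⟨max C (M * T ^ r), fun t ht ↦ ?_⟩
  rcases le_or_gt T t with hTt | htT
  · exact (hT t hTt).trans (by gcongr; exact le_max_left _ _)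
  · have hT0 : 0 < T := lt_trans ht htT
    rw [Real.norm_of_nonneg (rpow_nonneg (le_of_lt ht) _)]
    calc ‖f t‖ ≤ M := by simpa using isBigOWith_principal.1 hM t ht
      _ = M * T ^ r * T ^ (-r) := by
          rw [mul_assoc, ← rpow_add hT0, add_neg_cancel, rpow_zero, mul_one]
      _ ≤ M * T ^ r * t ^ (-r) :=
          mul_le_mul_of_nonneg_left (rpow_le_rpow_of_nonpos ht htT.le (neg_nonpos.2 hr))
            (by positivity)
      _ ≤ max C (M * T ^ r) * t ^ (-r) :=
          mul_le_mul_of_nonneg_right (le_max_right _ _) (rpow_nonneg (le_of_lt ht) _)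

section Oscillator

variable {E : Type*} [NormedAddCommGroup E] [InnerProductSpace ℝ E]
  {u v w : ℝ → E} {q Q : ℝ → ℝ}

lemma antitoneOn_exp_neg_mul_energy {D : Set ℝ} (hD : Convex ℝ D)
    (hu : ∀ t ∈ D, HasDerivAt u (v t) t) (hv : ∀ t ∈ D, HasDerivAt v (w t - u t) t)
    (hQ : ∀ t ∈ D, HasDerivAt Q (q t) t) (hq : ∀ t ∈ D, 0 ≤ q t)
    (hw : ∀ t ∈ D, ‖w t‖ ≤ q t * ‖u t‖) :
    AntitoneOn (fun t ↦ rexp (-Q t) * (‖u t‖ ^ 2 + ‖v t‖ ^ 2)) D := by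
  have hderiv (t : ℝ) (ht : t ∈ D) :
      HasDerivAt (fun t ↦ rexp (-Q t) * (‖u t‖ ^ 2 + ‖v t‖ ^ 2))
        (rexp (-Q t) * (2 * inner ℝ (v t) (w t) - q t * (‖u t‖ ^ 2 + ‖v t‖ ^ 2))) t := by
    refine ((hQ t ht).neg.exp.mul ((hu t ht).norm_sq.add (hv t ht).norm_sq)).congr_deriv ?_
    rw [inner_sub_right, real_inner_comm (u t) (v t)]
    simp only [Pi.add_apply, Pi.neg_apply]
    ring
  have hsub := interior_subset (s := D)
  refine antitoneOn_of_deriv_nonpos hD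
    (fun t ht ↦ (hderiv t ht).continuousAt.continuousWithinAt)
    (fun t ht ↦ (hderiv t (hsub ht)).differentiableAt.differentiableWithinAt) fun t ht ↦ ?_
  rw [(hderiv t (hsub ht)).deriv]
  refine mul_nonpos_of_nonneg_of_nonpos (exp_pos _).le (sub_nonpos.2 ?_)
  calc 2 * inner ℝ (v t) (w t) ≤ 2 * (‖v t‖ * (q t * ‖u t‖)) := by
        gcongr
        exact (real_inner_le_norm _ _).trans (by gcongr; exact hw t (hsub ht))
    _ = q t * (2 * ‖u t‖ * ‖v t‖) := by ring
    _ ≤ q t * (‖u t‖ ^ 2 + ‖v t‖ ^ 2) :=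
        mul_le_mul_of_nonneg_left (two_mul_le_add_sq _ _) (hq t (hsub ht))

lemma isBigO_one_of_perturbed_oscillator {a B : ℝ}
    (hu : ∀ t ∈ Ioi a, HasDerivAt u (v t) t) (hv : ∀ t ∈ Ioi a, HasDerivAt v (w t - u t) t)
    (hQ : ∀ t ∈ Ioi a, HasDerivAt Q (q t) t) (hq : ∀ t ∈ Ioi a, 0 ≤ q t)
    (hw : ∀ t ∈ Ioi a, ‖w t‖ ≤ q t * ‖u t‖) (hQB : ∀ t ∈ Ioi a, Q t ≤ B) :
    u =O[atTop] fun _ ↦ (1 : ℝ) := by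
  set G : ℝ → ℝ := fun t ↦ rexp (-Q t) * (‖u t‖ ^ 2 + ‖v t‖ ^ 2)
  have hanti : AntitoneOn G (Ioi a) := antitoneOn_exp_neg_mul_energy (convex_Ioi a) hu hv hQ hq hw
  refine .of_bound √(rexp B * G (a + 1)) ?_
  filter_upwards [eventually_ge_atTop (a + 1)] with t ht
  have hat : t ∈ Ioi a := (lt_add_one a).trans_le ht
  rw [norm_one, mul_one]
  apply Real.le_sqrt_of_sq_le
  calc ‖u t‖ ^ 2 ≤ ‖u t‖ ^ 2 + ‖v t‖ ^ 2 := le_add_of_nonneg_right (sq_nonneg _)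
    _ = rexp (Q t) * G t := by rw [← mul_assoc, ← exp_add, add_neg_cancel, exp_zero, one_mul]
    _ ≤ rexp B * G (a + 1) := by
        gcongr
        · exact hQB t hat
        · exact hanti (lt_add_one a) hat ht

end Oscillator

section BesselEquation

lemma hasDerivAt_ofReal_cpow (β : ℂ) {t : ℝ} (ht : t ≠ 0) :
    HasDerivAt (fun t : ℝ ↦ (t : ℂ) ^ β) (β * (t : ℂ) ^ (β - 1)) t := by
  rcases eq_or_ne β 0 with rfl | hβ
  · simpa using hasDerivAt_const t (1 : ℂ)
  · exact hasDerivAt_ofReal_cpow_const ht hβ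

/-- First-order form of the equation `t f'' + 2 β f' + t f = 0` on the positive half-line, with
`g = f'`; for `β = ν + 1/2` this is the equation satisfied by `t ^ (-ν) * J_ν(t)`. -/
structure IsBesselSystem (β : ℂ) (f g : ℝ → ℂ) : Prop where
  hasDerivAt_fst : ∀ t, 0 < t → HasDerivAt f (g t) t
  hasDerivAt_snd : ∀ t, 0 < t → HasDerivAt g (-(2 * β / t) * g t - f t) t

lemma IsBesselSystem.hasDerivAt_deriv_cpow_mul {β : ℂ} {f g : ℝ → ℂ} (h : IsBesselSystem β f g)
    {t : ℝ} (ht : 0 < t) :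
    HasDerivAt (fun t : ℝ ↦ β * (t : ℂ) ^ (β - 1) * f t + (t : ℂ) ^ β * g t)
      (β * (β - 1) / (t : ℂ) ^ 2 * ((t : ℂ) ^ β * f t) - (t : ℂ) ^ β * f t) t := by
  have ht0 : (t : ℂ) ≠ 0 := Complex.ofReal_ne_zero.2 ht.ne'
  refine ((((hasDerivAt_ofReal_cpow (β - 1) ht.ne').const_mul β).mul
    (h.hasDerivAt_fst t ht)).add
    ((hasDerivAt_ofReal_cpow β ht.ne').mul (h.hasDerivAt_snd t ht))).congr_deriv ?_
  simp only [Complex.cpow_sub _ _ ht0, Complex.cpow_one]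
  field_simp
  ring

lemma IsBesselSystem.isBigO_rpow_neg {β : ℂ} {f g : ℝ → ℂ} (h : IsBesselSystem β f g) :
    f =O[atTop] fun t ↦ t ^ (-β.re) := by
  have hQ (t : ℝ) (ht : 0 < t) :
      HasDerivAt (fun t : ℝ ↦ -(‖β * (β - 1)‖ / t)) (‖β * (β - 1)‖ / t ^ 2) t :=
    ((hasDerivAt_inv ht.ne').const_mul ‖β * (β - 1)‖).neg.congr_deriv (by ring)
  have hu : (fun t : ℝ ↦ (t : ℂ) ^ β * f t) =O[atTop] fun _ ↦ (1 : ℝ) :=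
    isBigO_one_of_perturbed_oscillator (a := 0) (B := 0)
      (fun t ht ↦ (hasDerivAt_ofReal_cpow β ht.ne').mul (h.hasDerivAt_fst t ht))
      (fun t ht ↦ h.hasDerivAt_deriv_cpow_mul ht) hQ (fun t _ ↦ by positivity)
      (fun t _ ↦ by rw [norm_mul, norm_div, norm_pow, Complex.norm_real, norm_eq_abs, sq_abs])
      (fun t ht ↦ neg_nonpos.2 (div_nonneg (norm_nonneg _) (le_of_lt ht)))
  have hpow : (fun t : ℝ ↦ (t : ℂ) ^ (-β)) =O[atTop] fun t ↦ t ^ (-β.re) :=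
    .of_bound' <| by
      filter_upwards [eventually_gt_atTop 0] with t ht
      rw [Complex.norm_cpow_eq_rpow_re_of_pos ht, Complex.neg_re]
      exact le_abs_self _
  refine (hpow.mul hu).congr' ?_ (.of_forall fun t ↦ mul_one _)
  filter_upwards [eventually_gt_atTop 0] with t ht
  have ht0 : (t : ℂ) ≠ 0 := Complex.ofReal_ne_zero.2 ht.ne'
  rw [← mul_assoc, ← Complex.cpow_add _ _ ht0, neg_add_cancel, Complex.cpow_zero, one_mul]

end BesselEquation

section FiniteFourier

/-- The finite Fourier transform `t ↦ ∫ s in a..b, e^{ist} w(s) ds` of a weight `w`. -/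
noncomputable def finiteFourier (a b : ℝ) (w : ℝ → ℂ) (t : ℝ) : ℂ :=
  ∫ s in a..b, Complex.exp (Complex.I * s * t) * w s

variable {a b : ℝ} {w w' : ℝ → ℂ}

lemma norm_exp_I_mul_mul (s t : ℝ) : ‖Complex.exp (Complex.I * s * t)‖ = 1 := by
  rw [mul_assoc, ← Complex.ofReal_mul, mul_comm, Complex.norm_exp_ofReal_mul_I]

lemma hasDerivAt_exp_I_mul_mul (s t : ℝ) :
    HasDerivAt (fun t : ℝ ↦ Complex.exp (Complex.I * s * t))
      (Complex.I * s * Complex.exp (Complex.I * s * t)) t := by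
  simpa [mul_comm] using ((hasDerivAt_id (t : ℂ)).const_mul (Complex.I * s)).cexp.comp_ofReal

lemma intervalIntegrable_exp_I_mul_mul (hw : IntervalIntegrable w volume a b) (t : ℝ) :
    IntervalIntegrable (fun s : ℝ ↦ Complex.exp (Complex.I * s * t) * w s) volume a b :=
  hw.continuousOn_mul (by fun_prop)

lemma intervalIntegrable_I_mul_mul (hw : IntervalIntegrable w volume a b) :
    IntervalIntegrable (fun s : ℝ ↦ Complex.I * s * w s) volume a b :=
  hw.continuousOn_mul (by fun_prop)

lemma norm_finiteFourier_le (hab : a ≤ b) (w : ℝ → ℂ) (t : ℝ) :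
    ‖finiteFourier a b w t‖ ≤ ∫ s in a..b, ‖w s‖ := by
  simpa only [finiteFourier, norm_mul, norm_exp_I_mul_mul, one_mul] using
    intervalIntegral.norm_integral_le_integral_norm (μ := volume)
      (f := fun s : ℝ ↦ Complex.exp (Complex.I * s * t) * w s) hab

lemma isBigO_one_finiteFourier (hab : a ≤ b) (w : ℝ → ℂ) (l : Filter ℝ) :
    finiteFourier a b w =O[l] fun _ ↦ (1 : ℝ) :=
  .of_bound (∫ s in a..b, ‖w s‖) <| .of_forall fun t ↦ by
    simpa using norm_finiteFourier_le hab w t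

lemma finiteFourier_sub (hw : IntervalIntegrable w volume a b)
    (hw' : IntervalIntegrable w' volume a b) (t : ℝ) :
    finiteFourier a b (fun s ↦ w s - w' s) t = finiteFourier a b w t - finiteFourier a b w' t := by
  simp only [finiteFourier, mul_sub]
  exact intervalIntegral.integral_sub (intervalIntegrable_exp_I_mul_mul hw t)
    (intervalIntegrable_exp_I_mul_mul hw' t)

lemma finiteFourier_const_mul (c : ℂ) (w : ℝ → ℂ) (t : ℝ) :
    finiteFourier a b (fun s ↦ c * w s) t = c * finiteFourier a b w t := by
  simp only [finiteFourier, mul_left_comm _ c]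
  exact intervalIntegral.integral_const_mul _ _

lemma hasDerivAt_finiteFourier (hw : IntervalIntegrable w volume a b) (t : ℝ) :
    HasDerivAt (finiteFourier a b w) (finiteFourier a b (fun s ↦ Complex.I * s * w s) t) t := by
  have hw₁ := intervalIntegrable_I_mul_mul hw
  refine (intervalIntegral.hasDerivAt_integral_of_dominated_loc_of_deriv_le
    (F' := fun (t s : ℝ) ↦ Complex.exp (Complex.I * s * t) * (Complex.I * s * w s))
    (bound := fun s : ℝ ↦ ‖Complex.I * s * w s‖) univ_mem
    (.of_forall fun t ↦ (intervalIntegrable_exp_I_mul_mul hw t).def'.aestronglyMeasurable)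
    (intervalIntegrable_exp_I_mul_mul hw t)
    (intervalIntegrable_exp_I_mul_mul hw₁ t).def'.aestronglyMeasurable
    (.of_forall fun s _ t _ ↦ ?_) hw₁.norm (.of_forall fun s _ t _ ↦ ?_)).2
  · rw [norm_mul, norm_exp_I_mul_mul, one_mul]
  · exact ((hasDerivAt_exp_I_mul_mul s t).mul_const (w s)).congr_deriv (by ring)

lemma finiteFourier_deriv (hw : ContinuousOn w [[a, b]])
    (hderiv : ∀ s ∈ Ioo (min a b) (max a b), HasDerivAt w (w' s) s)
    (hw' : IntervalIntegrable w' volume a b) (ha : w a = 0) (hb : w b = 0) (t : ℝ) :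
    finiteFourier a b w' t = -(Complex.I * t * finiteFourier a b w t) := by
  have hexp (s : ℝ) : HasDerivAt (fun s : ℝ ↦ Complex.exp (Complex.I * s * t))
      (Complex.I * t * Complex.exp (Complex.I * s * t)) s := by
    simpa only [mul_right_comm] using hasDerivAt_exp_I_mul_mul t s
  have hparts := intervalIntegral.integral_mul_deriv_eq_deriv_mul_of_hasDerivAt
    (by fun_prop) hw (fun s _ ↦ hexp s) hderiv
    (Continuous.intervalIntegrable (by fun_prop) a b) hw'
  simpa only [finiteFourier, ha, hb, mul_zero, sub_zero, zero_sub, mul_assoc,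
    intervalIntegral.integral_const_mul] using hparts

end FiniteFourier

section GegenbauerWeight

/-- The Gegenbauer weight `(1 - s²)^α`, whose finite Fourier transform over `[-1, 1]` is, up to
normalization, the Poisson integral of order `ν = α + 1/2`. -/
noncomputable def gegenbauerWeight (α : ℂ) (s : ℝ) : ℂ := ((1 - s ^ 2 : ℝ) : ℂ) ^ α

variable {α : ℂ}

lemma gegenbauerWeight_eq_beta (α : ℂ) {s : ℝ} (hs : s ∈ Icc (-1) 1) :
    gegenbauerWeight α s =
      4 ^ α * ((((s + 1) / 2 : ℝ) : ℂ) ^ α * (1 - (((s + 1) / 2 : ℝ) : ℂ)) ^ α) := by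
  have hl : 0 ≤ (s + 1) / 2 := by linarith [hs.1]
  have hr : 0 ≤ 1 - (s + 1) / 2 := by linarith [hs.2]
  have h4 := Complex.mul_cpow_ofReal_nonneg zero_le_four (mul_nonneg hl hr) α
  have hlr := Complex.mul_cpow_ofReal_nonneg hl hr α
  push_cast at h4 hlr
  rw [gegenbauerWeight]
  push_cast
  rw [← hlr, ← h4]
  ring_nf

lemma intervalIntegrable_gegenbauerWeight (hα : -1 < α.re) :
    IntervalIntegrable (gegenbauerWeight α) volume (-1) 1 := by
  have hre : 0 < (α + 1).re := by simpa using neg_lt_iff_pos_add.1 hα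
  have hbeta := Complex.betaIntegral_convergent hre hre
  simp only [add_sub_cancel_right] at hbeta
  have hscaled : IntervalIntegrable
      (fun s : ℝ ↦ (((s + 1) / 2 : ℝ) : ℂ) ^ α * (1 - (((s + 1) / 2 : ℝ) : ℂ)) ^ α)
      volume (-1) 1 := by
    have hright : (2 : ℝ) - 1 = 1 := by norm_num
    simpa [div_eq_inv_mul, hright] using (hbeta.comp_mul_left (c := 2⁻¹)).comp_add_right 1
  refine (hscaled.const_mul (4 ^ α)).congr_uIoo fun s hs ↦ ?_
  rw [uIoo_of_le (by norm_num)] at hs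
  exact (gegenbauerWeight_eq_beta α (Ioo_subset_Icc_self hs)).symm

lemma continuous_gegenbauerWeight (hα : 0 < α.re) : Continuous (gegenbauerWeight α) :=
  (Complex.continuous_ofReal_cpow_const hα).comp (by fun_prop : Continuous fun s : ℝ ↦ 1 - s ^ 2)

lemma gegenbauerWeight_of_sq_eq_one (hα : α ≠ 0) {s : ℝ} (hs : s ^ 2 = 1) :
    gegenbauerWeight α s = 0 := by
  simp [gegenbauerWeight, hs, hα]

lemma gegenbauerWeight_add_one (hα : α ≠ -1) (s : ℝ) :
    gegenbauerWeight (α + 1) s = (1 - (s : ℂ) ^ 2) * gegenbauerWeight α s := by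
  have hα' : α + 1 ≠ 0 := mt eq_neg_of_add_eq_zero_left hα
  rcases eq_or_ne (s ^ 2) 1 with hs | hs
  · rw [gegenbauerWeight_of_sq_eq_one hα' hs, ← Complex.ofReal_pow, hs, Complex.ofReal_one,
      sub_self, zero_mul]
  · have hne : ((1 - s ^ 2 : ℝ) : ℂ) ≠ 0 := Complex.ofReal_ne_zero.2 (sub_ne_zero.2 hs.symm)
    rw [gegenbauerWeight, Complex.cpow_add _ _ hne, Complex.cpow_one, mul_comm, ← gegenbauerWeight]
    push_cast
    rfl

lemma hasDerivAt_gegenbauerWeight (α : ℂ) {s : ℝ} (hs : s ^ 2 ≠ 1) :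
    HasDerivAt (gegenbauerWeight α) (-2 * α * (s * gegenbauerWeight (α - 1) s)) s := by
  have hinner : HasDerivAt (fun s : ℝ ↦ 1 - s ^ 2) (-(2 * s)) s := by
    simpa using (hasDerivAt_pow 2 s).const_sub 1
  refine ((hasDerivAt_ofReal_cpow α (sub_ne_zero.2 hs.symm)).scomp s hinner).congr_deriv ?_
  rw [Complex.real_smul, gegenbauerWeight]
  push_cast
  ring

lemma mul_finiteFourier_gegenbauerWeight_add_one (hα : -1 < α.re) (t : ℝ) :
    t * finiteFourier (-1) 1 (gegenbauerWeight (α + 1)) t =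
      -2 * (α + 1) * finiteFourier (-1) 1 (fun s ↦ Complex.I * s * gegenbauerWeight α s) t := by
  have hre : 0 < (α + 1).re := by simpa using neg_lt_iff_pos_add.1 hα
  have hα' : α + 1 ≠ 0 := fun h ↦ by simp [h] at hre
  have hparts := finiteFourier_deriv (a := -1) (b := 1) (w := gegenbauerWeight (α + 1))
    (w' := fun s ↦ -2 * (α + 1) * (s * gegenbauerWeight α s))
    (continuous_gegenbauerWeight hre).continuousOn
    (fun s hs ↦ by
      have hs' : s ^ 2 ≠ 1 := ((sq_lt_one_iff_abs_lt_one s).2 (abs_lt.2 (by simpa using hs))).ne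
      simpa only [add_sub_cancel_right] using hasDerivAt_gegenbauerWeight (α + 1) hs')
    (((intervalIntegrable_gegenbauerWeight hα).continuousOn_mul (by fun_prop)).const_mul _)
    (gegenbauerWeight_of_sq_eq_one hα' (by norm_num))
    (gegenbauerWeight_of_sq_eq_one hα' (by norm_num)) t
  rw [finiteFourier_const_mul] at hparts
  simp only [mul_assoc Complex.I]
  rw [finiteFourier_const_mul]
  linear_combination -Complex.I * hparts +
    t * finiteFourier (-1) 1 (gegenbauerWeight (α + 1)) t * Complex.I_sq

lemma isBesselSystem_finiteFourier_gegenbauerWeight (hα : -1 < α.re) :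
    IsBesselSystem (α + 1) (finiteFourier (-1) 1 (gegenbauerWeight α))
      (finiteFourier (-1) 1 fun s ↦ Complex.I * s * gegenbauerWeight α s) := by
  have hw := intervalIntegrable_gegenbauerWeight hα
  refine ⟨fun t _ ↦ hasDerivAt_finiteFourier hw t, fun t ht ↦
    (hasDerivAt_finiteFourier (intervalIntegrable_I_mul_mul hw) t).congr_deriv ?_⟩
  have hα' : α ≠ -1 := fun h ↦ by simp [h] at hα
  have hre : -1 < (α + 1).re := by simp only [Complex.add_re, Complex.one_re]; linarith
  have hsecond : (fun s : ℝ ↦ Complex.I * s * (Complex.I * s * gegenbauerWeight α s)) =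
      fun s ↦ gegenbauerWeight (α + 1) s - gegenbauerWeight α s := by
    funext s
    rw [gegenbauerWeight_add_one hα']
    linear_combination (s : ℂ) ^ 2 * gegenbauerWeight α s * Complex.I_sq
  have ht0 : (t : ℂ) ≠ 0 := Complex.ofReal_ne_zero.2 ht.ne'
  rw [hsecond, finiteFourier_sub (intervalIntegrable_gegenbauerWeight hre) hw, sub_left_inj]
  field_simp
  linear_combination mul_finiteFourier_gegenbauerWeight_add_one hα t

end GegenbauerWeight

lemma Jmod_eq_mul_finiteFourier (ν : ℂ) : Jmod ν = fun t ↦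
    ((2 : ℂ) ^ ν * Complex.Gamma (ν + 1 / 2) * Complex.Gamma (1 / 2))⁻¹ *
      finiteFourier (-1) 1 (gegenbauerWeight (ν - 1 / 2)) t :=
  rfl

/-- For Re μ > −1/2 there is c_μ > 0 with |𝒥_μ(t)| ≤ c_μ t^{−(Re μ + 1/2)} for all t > 0. -/
theorem Jmod_decay (μ : ℂ) (hμ : -(1 / 2) < μ.re) :
    ∃ c : ℝ, 0 < c ∧ ∀ t : ℝ, 0 < t → ‖Jmod μ t‖ ≤ c * t ^ (-(μ.re + 1 / 2)) := by
  have hre : (μ - 1 / 2).re = μ.re - 1 / 2 := by norm_num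
  have hα : -1 < (μ - 1 / 2).re := by linarith
  have hexponent : (μ - 1 / 2 + 1).re = μ.re + 1 / 2 := by
    rw [Complex.add_re, hre, Complex.one_re]; ring
  have hdecay : Jmod μ =O[atTop] fun t ↦ t ^ (-(μ.re + 1 / 2)) := by
    rw [Jmod_eq_mul_finiteFourier, ← hexponent]
    exact (isBesselSystem_finiteFourier_gegenbauerWeight hα).isBigO_rpow_neg.const_mul_left _
  have hbounded : Jmod μ =O[𝓟 (Ioi 0)] fun _ ↦ (1 : ℝ) := by
    rw [Jmod_eq_mul_finiteFourier]
    exact (isBigO_one_finiteFourier (by norm_num) _ _).const_mul_left _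
  obtain ⟨c, hc, hbound⟩ :=
    (isBigO_principal_Ioi_rpow_neg (by linarith) hbounded hdecay).exists_pos
  refine ⟨c, hc, fun t ht ↦ ?_⟩
  simpa only [norm_of_nonneg (rpow_nonneg ht.le _)] using isBigOWith_principal.1 hbound t ht
end
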